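/- arXiv:1512.02903 — 2 statements merged into one kernel-verified Lean document; each statement's English description precedes it below -/
import Mathlib

section
/- Let n ≥ 1 and d ≥ 1 be integers, let γ > 1, let z₁,…,z_d ∈ ℝⁿ, and let 0 < δ < 1. Set Q = [−1,1]ⁿ, let U_δ be the open δ-neighborhood of {z₁,…,z_d}, and Q_δ = Q \ U_δ. Then there exists a γ-doubling ball covering 𝒰 of Q_δ in ℝⁿ \ {z₁,…,z_d} consisting of at most d·(3√n·γ)ⁿ·log₂(3nγ/δ) balls. Moreover, 𝒰 can be chosen so that for any two points v, w belonging to the same connected component of Q_δ there is a finite sequence of pairwise distinct balls B_{j₁},…,B_{jℓ} of 𝒰 with v ∈ B_{j₁} and w ∈ B_{jℓ}, such that for each consecutive pair B_{j_m}, B_{j_{m+1}} the intersection B_{j_m} ∩ B_{j_{m+1}} is non-empty, the ratio of their radii is 1/2, 1 or 2, and the intersection contains a ball of radius at least 1/3 of the smaller of the two radii. -/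
open Metric Set

noncomputable section

/-- The unit cube `Q = [-1,1]ⁿ` in `ℝⁿ`. -/
def unitCube (n : ℕ) : Set (EuclideanSpace ℝ (Fin n)) := {x | ∀ i, |x i| ≤ 1}

namespace Whit

abbrev E (n : ℕ) := EuclideanSpace ℝ (Fin n)

/-- side length of the level-`k` cells -/
def sz (M k : ℕ) : ℝ := 2 / (M * 2 ^ k)

/-- first index of the block of bad cells in one coordinate -/
def tt (b M : ℕ) (x : ℝ) (k : ℕ) : ℤ := ⌈(x + 1) / sz M k - ((b : ℝ) + 1) / 2⌉

def Bad1 {n : ℕ} (b M : ℕ) (x : E n) (k : ℕ) (m : Fin n → ℤ) : Prop :=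
  ∀ i, tt b M (x i) k ≤ m i ∧ m i < tt b M (x i) k + b

def Good {n d : ℕ} (b M : ℕ) (z : Fin d → E n) (k : ℕ) (m : Fin n → ℤ) : Prop :=
  ∀ a, ¬ Bad1 b M (z a) k m

def par {n : ℕ} (m : Fin n → ℤ) : Fin n → ℤ := fun i => m i / 2

def Nb {n : ℕ} (m m' : Fin n → ℤ) : Prop :=
  ∃ i, (∀ j, j ≠ i → m j = m' j) ∧ |m i - m' i| ≤ 1

def cen {n : ℕ} (M k : ℕ) (m : Fin n → ℤ) : E n :=
  WithLp.toLp 2 (fun i => -1 + ((m i : ℝ) + 1 / 2) * sz M k)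

def rho (n : ℕ) : ℝ := max (Real.sqrt n) (3 / 2)

def rad (n M k : ℕ) : ℝ := rho n * sz M k / 2

def InCell {n : ℕ} (M k : ℕ) (m : Fin n → ℤ) (p : E n) : Prop :=
  ∀ i, (m i : ℝ) * sz M k ≤ p i + 1 ∧ p i + 1 ≤ ((m i : ℝ) + 1) * sz M k

def box (n M k : ℕ) : Finset (Fin n → ℤ) :=
  Fintype.piFinset (fun _ => Finset.Ico (0 : ℤ) ((M : ℤ) * 2 ^ k))

open Classical in
def Fam {n d : ℕ} (b M : ℕ) (z : Fin d → E n) (k : ℕ) : Finset (Fin n → ℤ) :=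
  (box n M k).filter (fun m => Good b M z k m ∧
    (k = 0 ∨ ¬ Good b M z (k - 1) (par m) ∨ ∃ m', Nb m m' ∧ ¬ Good b M z k m'))

lemma sz_pos {M : ℕ} (hM : 1 ≤ M) (k : ℕ) : 0 < sz M k := by
  have : (0 : ℝ) < M := by exact_mod_cast hM
  unfold sz; positivity

lemma sz_succ {M : ℕ} (hM : 1 ≤ M) (k : ℕ) : sz M k = 2 * sz M (k + 1) := by
  have : (0 : ℝ) < M := by exact_mod_cast hM
  unfold sz; rw [pow_succ]; field_simp

lemma tt_step {b M : ℕ} (hb : 2 ≤ b) (hM : 1 ≤ M) (x : ℝ) (k : ℕ) :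
    2 * tt b M x k ≤ tt b M x (k + 1) ∧ tt b M x (k + 1) ≤ 2 * tt b M x k + b ∧
    (3 ≤ b → 2 * tt b M x k + 1 ≤ tt b M x (k + 1) ∧
      tt b M x (k + 1) + 1 ≤ 2 * tt b M x k + b) := by
  have hs := sz_pos hM (k + 1)
  have h2 : (x + 1) / sz M (k + 1) = 2 * ((x + 1) / sz M k) := by
    rw [sz_succ hM k]; field_simp
  have hb' : (2 : ℝ) ≤ b := by exact_mod_cast hb
  have e1 := Int.le_ceil ((x + 1) / sz M k - ((b : ℝ) + 1) / 2)
  have e2 := Int.ceil_lt_add_one ((x + 1) / sz M k - ((b : ℝ) + 1) / 2)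
  have e3 := Int.le_ceil ((x + 1) / sz M (k + 1) - ((b : ℝ) + 1) / 2)
  have e4 := Int.ceil_lt_add_one ((x + 1) / sz M (k + 1) - ((b : ℝ) + 1) / 2)
  change _ ≤ ((tt b M x k : ℤ) : ℝ) at e1
  change ((tt b M x k : ℤ) : ℝ) < _ at e2
  change _ ≤ ((tt b M x (k + 1) : ℤ) : ℝ) at e3
  change ((tt b M x (k + 1) : ℤ) : ℝ) < _ at e4
  rw [h2] at e3 e4
  generalize tt b M x k = T at *
  generalize tt b M x (k + 1) = T1 at *
  refine ⟨?_, ?_, fun h3 => ⟨?_, ?_⟩⟩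
  · by_contra h
    have : (T1 : ℝ) + 1 ≤ 2 * T := by exact_mod_cast (by omega : T1 + 1 ≤ 2 * T)
    linarith
  · by_contra h
    have : 2 * (T : ℝ) + b + 1 ≤ T1 := by exact_mod_cast (by omega : 2 * T + b + 1 ≤ T1)
    linarith
  · have h3' : (3 : ℝ) ≤ b := by exact_mod_cast h3
    by_contra h
    have : (T1 : ℝ) ≤ 2 * T := by exact_mod_cast (by omega : T1 ≤ 2 * T)
    linarith
  · have h3' : (3 : ℝ) ≤ b := by exact_mod_cast h3
    by_contra h
    have : 2 * (T : ℝ) + b ≤ T1 := by exact_mod_cast (by omega : 2 * T + b ≤ T1)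
    linarith

lemma good_child {n d b M : ℕ} (hb : 2 ≤ b) (hM : 1 ≤ M) (z : Fin d → E n) (k : ℕ)
    (m : Fin n → ℤ) (h : Good b M z k (par m)) : Good b M z (k + 1) m := by
  intro a hbad
  apply h a
  intro i
  have h1 := hbad i
  have h2 := tt_step hb hM (z a i) k
  simp only [par]
  omega

lemma tt_bounds (b M : ℕ) (hM : 1 ≤ M) (x : ℝ) (k : ℕ) (m : ℤ) :
    (m < tt b M x k → (b : ℝ) / 2 * sz M k ≤ x - (-1 + ((m : ℝ) + 1 / 2) * sz M k)) ∧
    (tt b M x k + b ≤ m → (b : ℝ) / 2 * sz M k ≤ (-1 + ((m : ℝ) + 1 / 2) * sz M k) - x) ∧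
    (tt b M x k ≤ m → m < tt b M x k + b →
      |(-1 + ((m : ℝ) + 1 / 2) * sz M k) - x| ≤ (b : ℝ) / 2 * sz M k) := by
  have hs := sz_pos hM k
  have e1 := Int.le_ceil ((x + 1) / sz M k - ((b : ℝ) + 1) / 2)
  have e2 := Int.ceil_lt_add_one ((x + 1) / sz M k - ((b : ℝ) + 1) / 2)
  change _ ≤ ((tt b M x k : ℤ) : ℝ) at e1
  change ((tt b M x k : ℤ) : ℝ) < _ at e2
  generalize tt b M x k = T at *
  obtain ⟨w, hw⟩ : ∃ w, w = (x + 1) / sz M k := ⟨_, rfl⟩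
  have hx : x = w * sz M k - 1 := by rw [hw]; field_simp; ring
  rw [← hw] at e1 e2
  rw [hx]
  generalize sz M k = s at *
  refine ⟨fun h => ?_, fun h => ?_, fun h h' => ?_⟩
  · have : (m : ℝ) + 1 ≤ T := by exact_mod_cast h
    nlinarith
  · have : (T : ℝ) + b ≤ m := by exact_mod_cast h
    nlinarith
  · have h1 : (T : ℝ) ≤ m := by exact_mod_cast h
    have h2 : (m : ℝ) + 1 ≤ T + b := by exact_mod_cast h'
    rw [abs_le]
    constructor <;> nlinarith

/-- Euclidean distance vs coordinates -/
lemma dist_le_sqrt {n : ℕ} (p q : E n) (t : ℝ) (ht : 0 ≤ t) (h : ∀ i, |p i - q i| ≤ t) :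
    dist p q ≤ Real.sqrt n * t := by
  rw [EuclideanSpace.dist_eq]
  have : Real.sqrt n * t = Real.sqrt (n * t ^ 2) := by
    rw [Real.sqrt_mul (by positivity), Real.sqrt_sq ht]
  rw [this]
  apply Real.sqrt_le_sqrt
  calc ∑ i, dist (p i) (q i) ^ 2 ≤ ∑ _i : Fin n, t ^ 2 := by
        apply Finset.sum_le_sum
        intro i _
        rw [Real.dist_eq]
        have := h i
        have h0 := abs_nonneg (p i - q i)
        gcongr
    _ = n * t ^ 2 := by simp

lemma coord_le_dist {n : ℕ} (p q : E n) (i : Fin n) : |p i - q i| ≤ dist p q := by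
  rw [dist_eq_norm]
  have := PiLp.norm_apply_le (p - q) i
  simpa using this

lemma rho_ge (n : ℕ) : Real.sqrt n ≤ rho n ∧ 3 / 2 ≤ rho n := ⟨le_max_left _ _, le_max_right _ _⟩

lemma rad_pos {n M : ℕ} (hM : 1 ≤ M) (k : ℕ) : 0 < rad n M k := by
  have := sz_pos hM k
  have := rho_ge n
  have : 0 < rho n := by linarith
  unfold rad; positivity

lemma rad_succ {n M : ℕ} (hM : 1 ≤ M) (k : ℕ) : rad n M k = 2 * rad n M (k + 1) := by
  unfold rad; rw [sz_succ hM k]; ring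

lemma good_avoid {n d b M : ℕ} (hM : 1 ≤ M) (z : Fin d → E n) (k : ℕ) (m : Fin n → ℤ)
    (γ : ℝ) (hy : γ * rho n < b) (h : Good b M z k m) :
    closedBall (cen M k m) (γ * rad n M k) ⊆ {x | ∀ i, x ≠ z i} := by
  intro x hx a hxa
  subst hxa
  apply h a
  intro i
  have hs := sz_pos hM k
  rw [mem_closedBall] at hx
  have h1 := coord_le_dist (z a) (cen M k m) i
  obtain ⟨b1, b2, -⟩ := tt_bounds b M hM (z a i) k (m i)
  have h3 : |(z a) i - (cen M k m) i| < (b : ℝ) / 2 * sz M k := by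
    refine lt_of_le_of_lt (h1.trans hx) ?_
    unfold rad
    nlinarith
  have h4 : (cen M k m) i = -1 + ((m i : ℝ) + 1 / 2) * sz M k := rfl
  rw [h4, abs_lt] at h3
  constructor
  · by_contra hc
    have := b1 (by omega)
    linarith
  · by_contra hc
    have := b2 (by omega)
    linarith

lemma incell_cen {n M k : ℕ} {m : Fin n → ℤ} {p : E n} (h : InCell M k m p) (i : Fin n) :
    |p i - cen M k m i| ≤ sz M k / 2 := by
  have h4 : (cen M k m) i = -1 + ((m i : ℝ) + 1 / 2) * sz M k := rfl
  have := h i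
  rw [h4, abs_le]
  constructor <;> linarith

lemma incell_ball {n M k : ℕ} (hM : 1 ≤ M) {m : Fin n → ℤ} {p : E n} (h : InCell M k m p) :
    p ∈ closedBall (cen M k m) (rad n M k) := by
  have hs := sz_pos hM k
  rw [mem_closedBall]
  refine (dist_le_sqrt _ _ _ (by positivity) (incell_cen h)).trans ?_
  have := (rho_ge n).1
  unfold rad
  nlinarith

lemma incell_good {n d b M K : ℕ} (hM : 1 ≤ M) (z : Fin d → E n) (δ : ℝ)
    (hδ : Real.sqrt n * (b + 1) / (M * 2 ^ K) < δ) {m : Fin n → ℤ} {p : E n}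
    (hp : ∀ a, p ∉ ball (z a) δ) (h : InCell M K m p) : Good b M z K m := by
  intro a hbad
  apply hp a
  rw [mem_ball]
  have hs := sz_pos hM K
  refine lt_of_le_of_lt (dist_le_sqrt p (z a) (((b : ℝ) + 1) / 2 * sz M K) (by positivity) ?_) ?_
  · intro i
    have h1 := incell_cen h i
    have h2 := (tt_bounds b M hM (z a i) K (m i)).2.2 (hbad i).1 (hbad i).2
    have h4 : (cen M K m) i = -1 + ((m i : ℝ) + 1 / 2) * sz M K := rfl
    rw [← h4] at h2
    have := abs_sub_le (p i) (cen M K m i) (z a i)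
    linarith
  · refine lt_of_eq_of_lt ?_ hδ
    unfold sz
    have : (0 : ℝ) < M := by exact_mod_cast hM
    field_simp

lemma incell_par {n M k : ℕ} (hM : 1 ≤ M) {m : Fin n → ℤ} {p : E n} (h : InCell M (k + 1) m p) :
    InCell M k (par m) p := by
  intro i
  have hs := sz_pos hM (k + 1)
  have h1 := h i
  rw [sz_succ hM k]
  simp only [par]
  have a1 : 2 * ((m i / 2 : ℤ) : ℝ) ≤ m i := by
    exact_mod_cast (by omega : 2 * (m i / 2) ≤ m i)
  have a2 : (m i : ℝ) + 1 ≤ 2 * ((m i / 2 : ℤ) : ℝ) + 2 := by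
    exact_mod_cast (by omega : m i + 1 ≤ 2 * (m i / 2) + 2)
  constructor <;> nlinarith

/-- ball of a child is contained in the ball of the parent -/
lemma child_ball {n M k : ℕ} (hM : 1 ≤ M) (m : Fin n → ℤ) :
    closedBall (cen M (k + 1) m) (rad n M (k + 1)) ⊆ closedBall (cen M k (par m)) (rad n M k) := by
  apply closedBall_subset_closedBall'
  have hs := sz_pos hM (k + 1)
  have h := dist_le_sqrt (cen M (k + 1) m) (cen M k (par m)) (sz M (k + 1) / 2) (by positivity) (by
    intro i
    have h4 : (cen M (k + 1) m) i = -1 + ((m i : ℝ) + 1 / 2) * sz M (k + 1) := rfl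
    have h5 : (cen M k (par m)) i = -1 + (((m i / 2 : ℤ) : ℝ) + 1 / 2) * sz M k := rfl
    rw [h4, h5, sz_succ hM k]
    have a1 : 2 * ((m i / 2 : ℤ) : ℝ) ≤ m i := by
      exact_mod_cast (by omega : 2 * (m i / 2) ≤ m i)
    have a2 : (m i : ℝ) + 1 ≤ 2 * ((m i / 2 : ℤ) : ℝ) + 2 := by
      exact_mod_cast (by omega : m i + 1 ≤ 2 * (m i / 2) + 2)
    rw [abs_le]
    constructor <;> nlinarith)
  have := (rho_ge n).1
  rw [rad_succ hM k]
  have : Real.sqrt n * (sz M (k + 1) / 2) ≤ rad n M (k + 1) := by unfold rad; nlinarith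
  linarith

lemma nb_ball {n M k : ℕ} (hM : 1 ≤ M) (m m' : Fin n → ℤ) (h : Nb m m') :
    ∃ c', closedBall c' (rad n M k / 3) ⊆
      closedBall (cen M k m) (rad n M k) ∩ closedBall (cen M k m') (rad n M k) := by
  have hs := sz_pos hM k
  obtain ⟨i, hi, hi1⟩ := h
  have hd : dist (cen M k m) (cen M k m') ≤ sz M k := by
    rw [EuclideanSpace.dist_eq]
    rw [Finset.sum_eq_single i]
    · rw [Real.sqrt_sq dist_nonneg, Real.dist_eq]
      have h4 : (cen M k m) i = -1 + ((m i : ℝ) + 1 / 2) * sz M k := rfl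
      have h5 : (cen M k m') i = -1 + ((m' i : ℝ) + 1 / 2) * sz M k := rfl
      have h6 : |(m i : ℝ) - m' i| ≤ 1 := by exact_mod_cast hi1
      rw [h4, h5, show (-1 + ((m i : ℝ) + 1 / 2) * sz M k) - (-1 + ((m' i : ℝ) + 1 / 2) * sz M k)
        = ((m i : ℝ) - m' i) * sz M k by ring, abs_mul, abs_of_pos hs]
      nlinarith
    · intro j _ hj
      have : (cen M k m) j = (cen M k m') j := by
        change -1 + ((m j : ℝ) + 1 / 2) * sz M k = -1 + ((m' j : ℝ) + 1 / 2) * sz M k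
        rw [hi j hj]
      rw [this]; simp
    · simp
  have hr : 3 / 4 * sz M k ≤ rad n M k := by
    have := (rho_ge n).2
    unfold rad; nlinarith
  refine ⟨midpoint ℝ (cen M k m) (cen M k m'), subset_inter ?_ ?_⟩
  · apply closedBall_subset_closedBall'
    rw [dist_midpoint_left]
    norm_num
    linarith
  · apply closedBall_subset_closedBall'
    rw [dist_midpoint_right]
    norm_num
    linarith


def cnt (n b : ℕ) : ℕ := (2 * b) ^ n - b ^ n + (if b = 2 then n * b ^ (n - 1) else 0)

lemma par_bad {n b M : ℕ} {x : E n} {k : ℕ} {m : Fin n → ℤ} (h : Bad1 b M x k (par m)) (i : Fin n) :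
    2 * tt b M (x i) k ≤ m i ∧ m i < 2 * tt b M (x i) k + 2 * b := by
  have := h i
  simp only [par] at this
  omega

open Classical in
lemma card_one {n b M : ℕ} (hb : 2 ≤ b) (hM : 1 ≤ M) (x : E n) (k : ℕ) :
    ∃ S : Finset (Fin n → ℤ), S.card ≤ cnt n b ∧ ∀ m : Fin n → ℤ, ¬ Bad1 b M x (k + 1) m →
      (Bad1 b M x k (par m) ∨ ∃ m', Nb m m' ∧ Bad1 b M x (k + 1) m') → m ∈ S := by
  set J : Fin n → Finset ℤ := fun i =>
    Finset.Ico (2 * tt b M (x i) k) (2 * tt b M (x i) k + 2 * b) with hJ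
  set I : Fin n → Finset ℤ := fun i =>
    Finset.Ico (tt b M (x i) (k + 1)) (tt b M (x i) (k + 1) + b) with hI
  set X : Fin n → Finset ℤ := fun i =>
    ({tt b M (x i) (k + 1) - 1, tt b M (x i) (k + 1) + b} : Finset ℤ) \ J i with hX
  have hIJ : ∀ i, I i ⊆ J i := by
    intro i y hy
    have := tt_step hb hM (x i) k
    simp only [hI, hJ, Finset.mem_Ico] at hy ⊢
    omega
  have hXc : ∀ i, (X i).card ≤ if b = 2 then 1 else 0 := by
    intro i
    have hst := tt_step hb hM (x i) k
    split_ifs with h2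
    · apply Finset.card_le_one.2
      intro u hu v hv
      simp only [hX, hJ, Finset.mem_sdiff, Finset.mem_insert, Finset.mem_singleton,
        Finset.mem_Ico] at hu hv
      omega
    · rw [Nat.le_zero, Finset.card_eq_zero, Finset.eq_empty_iff_forall_notMem]
      intro u hu
      simp only [hX, hJ, Finset.mem_sdiff, Finset.mem_insert, Finset.mem_singleton,
        Finset.mem_Ico] at hu
      have := hst.2.2 (by omega)
      omega
  refine ⟨(Fintype.piFinset J \ Fintype.piFinset I) ∪
    Finset.univ.biUnion (fun i => Fintype.piFinset (Function.update I i (X i))), ?_, ?_⟩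
  · refine (Finset.card_union_le _ _).trans ?_
    unfold cnt
    apply Nat.add_le_add
    · rw [Finset.card_sdiff_of_subset (Fintype.piFinset_subset _ _ hIJ)]
      have hc : (2 * (b : ℤ)).toNat = 2 * b := by omega
      simp [Fintype.card_piFinset, hJ, hI, hc]
    · refine Finset.card_biUnion_le.trans ?_
      have : ∀ i ∈ (Finset.univ : Finset (Fin n)),
          (Fintype.piFinset (Function.update I i (X i))).card ≤
          (if b = 2 then 1 else 0) * b ^ (n - 1) := by
        intro i _
        rw [Fintype.card_piFinset, ← Finset.mul_prod_erase _ _ (Finset.mem_univ i)]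
        apply Nat.mul_le_mul
        · simpa using hXc i
        · rw [Finset.prod_congr rfl (g := fun _ => b)]
          · simp
          · intro j hj
            rw [Function.update_of_ne (Finset.ne_of_mem_erase hj)]
            simp [hI]
      refine (Finset.sum_le_sum this).trans ?_
      split_ifs <;> simp
  · intro m hm hor
    have hmI : m ∉ Fintype.piFinset I := by
      intro hc
      apply hm
      intro i
      have := Fintype.mem_piFinset.1 hc i
      simpa [hI] using this
    rw [Finset.mem_union, Finset.mem_sdiff]
    rcases hor with h | ⟨m', ⟨i, hi, hi1⟩, hb'⟩
    · left
      refine ⟨Fintype.mem_piFinset.2 fun i => ?_, hmI⟩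
      simpa [hJ] using par_bad h i
    · have hj : ∀ j, j ≠ i → m j ∈ I j := by
        intro j hji
        rw [hi j hji]
        simpa [hI] using hb' j
      by_cases hJi : m i ∈ J i
      · left
        refine ⟨Fintype.mem_piFinset.2 fun j => ?_, hmI⟩
        by_cases hji : j = i
        · rw [hji]; exact hJi
        · exact hIJ j (hj j hji)
      · right
        rw [Finset.mem_biUnion]
        refine ⟨i, Finset.mem_univ _, Fintype.mem_piFinset.2 fun j => ?_⟩
        by_cases hji : j = i
        · subst hji
          rw [Function.update_self]
          simp only [hX, Finset.mem_sdiff, Finset.mem_insert, Finset.mem_singleton]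
          refine ⟨?_, hJi⟩
          have h1 : m j ∉ I j := fun h => hJi (hIJ j h)
          have h2 := hb' j
          simp only [hI, Finset.mem_Ico] at h1
          rw [abs_le] at hi1
          omega
        · rw [Function.update_of_ne hji]; exact hj j hji

open Classical in
lemma card_level {n d b M : ℕ} (hb : 2 ≤ b) (hM : 1 ≤ M) (z : Fin d → E n) (k : ℕ) :
    (Fam b M z (k + 1)).card ≤ d * cnt n b := by
  choose S hS1 hS2 using fun a => card_one hb hM (z a) k
  have hsub : Fam b M z (k + 1) ⊆ Finset.univ.biUnion S := by
    intro m hm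
    simp only [Fam, Finset.mem_filter] at hm
    obtain ⟨-, hg, h⟩ := hm
    rw [Finset.mem_biUnion]
    rcases h with h | h | ⟨m', hn, h⟩
    · omega
    · simp only [Good, not_forall, not_not, Nat.add_sub_cancel] at h
      obtain ⟨a, ha⟩ := h
      exact ⟨a, Finset.mem_univ _, hS2 a m (hg a) (Or.inl ha)⟩
    · simp only [Good, not_forall, not_not] at h
      obtain ⟨a, ha⟩ := h
      exact ⟨a, Finset.mem_univ _, hS2 a m (hg a) (Or.inr ⟨m', hn, ha⟩)⟩
  refine (Finset.card_le_card hsub).trans (Finset.card_biUnion_le.trans ?_)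
  refine (Finset.sum_le_sum fun a _ => hS1 a).trans ?_
  simp

open Classical in
def FF {n d : ℕ} (b M : ℕ) (z : Fin d → E n) (K : ℕ) : Finset (ℕ × (Fin n → ℤ)) :=
  (Finset.range (K + 1)).biUnion fun k => (Fam b M z k).image fun m => (k, m)

lemma mem_FF {n d b M : ℕ} {z : Fin d → E n} {K : ℕ} {p : ℕ × (Fin n → ℤ)} :
    p ∈ FF b M z K ↔ p.1 ≤ K ∧ p.2 ∈ Fam b M z p.1 := by
  obtain ⟨k, m⟩ := p
  simp only [FF, Finset.mem_biUnion, Finset.mem_range, Finset.mem_image, Prod.mk.injEq]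
  constructor
  · rintro ⟨a, ha, m', hm', rfl, rfl⟩
    exact ⟨by omega, hm'⟩
  · rintro ⟨h1, h2⟩
    exact ⟨k, by omega, m, h2, rfl, rfl⟩

lemma card_FF {n d b M : ℕ} (hb : 2 ≤ b) (hM : 1 ≤ M) (z : Fin d → E n) (K : ℕ) :
    (FF b M z K).card ≤ M ^ n + K * (d * cnt n b) := by
  classical
  unfold FF
  refine Finset.card_biUnion_le.trans ?_
  rw [Finset.sum_range_succ', add_comm]
  apply Nat.add_le_add
  · refine Finset.card_image_le.trans ?_
    refine (Finset.card_le_card (Finset.filter_subset _ _)).trans ?_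
    simp [box, Fintype.card_piFinset]
  · refine (Finset.sum_le_sum fun k _ => Finset.card_image_le.trans (card_level hb hM z k)).trans ?_
    simp

def Link {n : ℕ} (M : ℕ) (p q : ℕ × (Fin n → ℤ)) : Prop :=
  (rad n M p.1 / rad n M q.1 = 1 / 2 ∨ rad n M p.1 / rad n M q.1 = 1 ∨
    rad n M p.1 / rad n M q.1 = 2) ∧
  ∃ c' : E n, closedBall c' (min (rad n M p.1) (rad n M q.1) / 3) ⊆
    closedBall (cen M p.1 p.2) (rad n M p.1) ∩ closedBall (cen M q.1 q.2) (rad n M q.1)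

lemma Link.symm {n M : ℕ} {p q : ℕ × (Fin n → ℤ)} (h : Link M p q) : Link M q p := by
  obtain ⟨h1, c', h2⟩ := h
  refine ⟨?_, c', by rwa [min_comm, inter_comm]⟩
  rw [← inv_div]
  rcases h1 with h | h | h <;> rw [h] <;> norm_num

lemma link_same {n M : ℕ} (hM : 1 ≤ M) {k : ℕ} {m m' : Fin n → ℤ} (h : Nb m m') :
    Link M (k, m) (k, m') := by
  have := rad_pos (n := n) hM k
  refine ⟨Or.inr (Or.inl (div_self this.ne')), ?_⟩
  simpa using nb_ball hM m m' h

lemma link_down {n M : ℕ} (hM : 1 ≤ M) {k : ℕ} {m m' : Fin n → ℤ} (h : Nb m m') :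
    Link M (k, par m) (k + 1, m') := by
  have h0 := rad_pos (n := n) hM (k + 1)
  have h1 := rad_succ (n := n) hM k
  refine ⟨Or.inr (Or.inr ?_), ?_⟩
  · simp only [h1]; field_simp
  · obtain ⟨c', hc⟩ := nb_ball (k := k + 1) hM m m' h
    refine ⟨c', ?_⟩
    simp only
    rw [min_eq_right (by linarith)]
    exact hc.trans (inter_subset_inter_left _ (child_ball hM m))

lemma nb_refl {n : ℕ} (hn : 1 ≤ n) (m : Fin n → ℤ) : Nb m m := ⟨⟨0, hn⟩, fun _ _ => rfl, by simp⟩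

lemma nb_symm {n : ℕ} {m m' : Fin n → ℤ} (h : Nb m m') : Nb m' m := by
  obtain ⟨i, h1, h2⟩ := h
  exact ⟨i, fun j hj => (h1 j hj).symm, by rwa [abs_sub_comm]⟩

def RR {n d : ℕ} (b M : ℕ) (z : Fin d → E n) (K : ℕ) (p q : ℕ × (Fin n → ℤ)) : Prop :=
  p ∈ FF b M z K ∧ q ∈ FF b M z K ∧ Link M p q

def Conn {n d : ℕ} (b M : ℕ) (z : Fin d → E n) (K : ℕ) (p q : ℕ × (Fin n → ℤ)) : Prop :=
  Relation.ReflTransGen (RR b M z K) p q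

lemma RR.symm {n d b M : ℕ} {z : Fin d → E n} {K : ℕ} {p q : ℕ × (Fin n → ℤ)}
    (h : RR b M z K p q) : RR b M z K q p := ⟨h.2.1, h.1, h.2.2.symm⟩

lemma Conn.symm {n d b M : ℕ} {z : Fin d → E n} {K : ℕ} {p q : ℕ × (Fin n → ℤ)}
    (h : Conn b M z K p q) : Conn b M z K q p := by
  unfold Conn at *
  induction h with
  | refl => exact .refl
  | tail _ h ih => exact .head h.symm ih

def anc {n : ℕ} (K k : ℕ) (m : Fin n → ℤ) : Fin n → ℤ := fun i => m i / 2 ^ (K - k)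

lemma anc_self {n : ℕ} (K : ℕ) (m : Fin n → ℤ) : anc K K m = m := by
  funext i; simp [anc]

lemma anc_par {n : ℕ} {K k : ℕ} (h : k + 1 ≤ K) (m : Fin n → ℤ) :
    anc K k m = par (anc K (k + 1) m) := by
  funext i
  simp only [anc, par]
  rw [Int.ediv_ediv_of_nonneg (by positivity), ← pow_succ]
  congr 2; omega

lemma anc_nb {n : ℕ} (K k : ℕ) {m m' : Fin n → ℤ} (h : Nb m m') : Nb (anc K k m) (anc K k m') := by
  obtain ⟨i, h1, h2⟩ := h
  refine ⟨i, fun j hj => by simp [anc, h1 j hj], ?_⟩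
  simp only [anc]
  have hD : (0 : ℤ) < 2 ^ (K - k) := by positivity
  generalize (2 : ℤ) ^ (K - k) = D at *
  have key : ∀ u v : ℤ, u ≤ v + 1 → u / D ≤ v / D + 1 := by
    intro u v huv
    have := Int.ediv_le_ediv hD (show u ≤ v + 1 * D by omega)
    rwa [Int.add_mul_ediv_right _ _ hD.ne'] at this
  rw [abs_le] at *
  have := key (m i) (m' i) (by omega)
  have := key (m' i) (m i) (by omega)
  omega

lemma anc_box {n M K k : ℕ} (h : k ≤ K) {m : Fin n → ℤ} (hm : m ∈ box n M K) :
    anc K k m ∈ box n M k := by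
  simp only [box, Fintype.mem_piFinset, Finset.mem_Ico] at *
  intro i
  have hD : (0 : ℤ) < 2 ^ (K - k) := by positivity
  refine ⟨Int.ediv_nonneg (hm i).1 hD.le, ?_⟩
  apply Int.ediv_lt_of_lt_mul hD
  rw [mul_assoc, ← pow_add, show k + (K - k) = K by omega]
  exact (hm i).2

lemma anc_incell {n M K : ℕ} (hM : 1 ≤ M) {m : Fin n → ℤ} {p : E n} (h : InCell M K m p) {k : ℕ}
    (hk : k ≤ K) : InCell M k (anc K k m) p := by
  induction hk using Nat.decreasingInduction with
  | self => rwa [anc_self]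
  | of_succ j hj ih => rw [anc_par hj]; exact incell_par hM ih

def lv {n d : ℕ} (b M : ℕ) (z : Fin d → E n) (K : ℕ) (m : Fin n → ℤ) : ℕ :=
  sInf {k | Good b M z k (anc K k m)}

def leaf {n d : ℕ} (b M : ℕ) (z : Fin d → E n) (K : ℕ) (m : Fin n → ℤ) : ℕ × (Fin n → ℤ) :=
  (lv b M z K m, anc K (lv b M z K m) m)

lemma lv_spec {n d b M : ℕ} {z : Fin d → E n} {K : ℕ} {m : Fin n → ℤ} (h : Good b M z K m) :
    lv b M z K m ≤ K ∧ Good b M z (lv b M z K m) (anc K (lv b M z K m) m) ∧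
    ∀ j < lv b M z K m, ¬ Good b M z j (anc K j m) := by
  have h' : K ∈ {k | Good b M z k (anc K k m)} := by simpa [anc_self] using h
  exact ⟨Nat.sInf_le h', Nat.sInf_mem ⟨K, h'⟩, fun j hj => Nat.notMem_of_lt_sInf hj⟩

lemma mem_Fam {n d b M : ℕ} {z : Fin d → E n} {k : ℕ} {m : Fin n → ℤ} :
    m ∈ Fam b M z k ↔ m ∈ box n M k ∧ Good b M z k m ∧
    (k = 0 ∨ ¬ Good b M z (k - 1) (par m) ∨ ∃ m', Nb m m' ∧ ¬ Good b M z k m') := by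
  simp only [Fam, Finset.mem_filter]

lemma leaf_mem {n d b M : ℕ} {z : Fin d → E n} {K : ℕ} {m : Fin n → ℤ} (h : Good b M z K m)
    (hm : m ∈ box n M K) : leaf b M z K m ∈ FF b M z K := by
  obtain ⟨h1, h2, h3⟩ := lv_spec h
  rw [mem_FF]
  refine ⟨h1, ?_⟩
  refine mem_Fam.2 ⟨anc_box h1 hm, h2, ?_⟩
  simp only [leaf]
  generalize lv b M z K m = k at *
  cases k with
  | zero => left; rfl
  | succ k =>
    right; left
    rw [Nat.add_sub_cancel, ← anc_par h1]
    exact h3 k (by omega)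

lemma chain_le {n d b M : ℕ} (hn : 1 ≤ n) (hb : 2 ≤ b) (hM : 1 ≤ M) {z : Fin d → E n} {K : ℕ}
    {m m' : Fin n → ℤ}
    (h : Good b M z K m) (hm : m ∈ box n M K) (h' : Good b M z K m') (hm' : m' ∈ box n M K)
    (hnb : Nb m m') (hle : lv b M z K m ≤ lv b M z K m') :
    Conn b M z K (leaf b M z K m) (leaf b M z K m') := by
  have l1 := leaf_mem h hm
  have l2 := leaf_mem h' hm'
  obtain ⟨a1, a2, a3⟩ := lv_spec h
  obtain ⟨b1, b2, b3⟩ := lv_spec h'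
  unfold leaf at *
  generalize lv b M z K m = a at *
  generalize lv b M z K m' = c at *
  rcases hle.eq_or_lt with rfl | hlt
  · exact .single ⟨l1, l2, link_same hM (anc_nb K a hnb)⟩
  · have key : ∀ k, a ≤ k → k < c → (Good b M z k (anc K k m) ∧ (k, anc K k m) ∈ FF b M z K ∧
        Conn b M z K (a, anc K a m) (k, anc K k m)) := by
      intro k hk
      induction k, hk using Nat.le_induction with
      | base => intro _; exact ⟨a2, l1, .refl⟩
      | succ k hk ih =>
        intro hkc
        obtain ⟨i1, i2, i3⟩ := ih (by omega)
        have hp := anc_par (show k + 1 ≤ K by omega) m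
        have g : Good b M z (k + 1) (anc K (k + 1) m) := good_child hb hM z k _ (hp ▸ i1)
        have mem : (k + 1, anc K (k + 1) m) ∈ FF b M z K := by
          rw [mem_FF]
          refine ⟨by simp only; omega, ?_⟩
          simp only [Fam, Finset.mem_filter]
          exact ⟨anc_box (by omega) hm, g, Or.inr (Or.inr ⟨_, anc_nb K (k + 1) hnb, b3 _ hkc⟩)⟩
        refine ⟨g, mem, i3.tail ⟨i2, mem, ?_⟩⟩
        rw [hp]
        exact link_down hM (nb_refl hn _)
    obtain ⟨e, rfl⟩ : ∃ e, c = e + 1 := ⟨c - 1, by omega⟩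
    obtain ⟨i1, i2, i3⟩ := key e (by omega) (by omega)
    refine i3.tail ⟨i2, l2, ?_⟩
    rw [anc_par (show e + 1 ≤ K by omega) m]
    exact link_down hM (anc_nb K (e + 1) hnb)

lemma chain_nb {n d b M : ℕ} (hn : 1 ≤ n) (hb : 2 ≤ b) (hM : 1 ≤ M) {z : Fin d → E n} {K : ℕ}
    {m m' : Fin n → ℤ}
    (h : Good b M z K m) (hm : m ∈ box n M K) (h' : Good b M z K m') (hm' : m' ∈ box n M K)
    (hnb : Nb m m') :
    Conn b M z K (leaf b M z K m) (leaf b M z K m') := by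
  rcases le_total (lv b M z K m) (lv b M z K m') with hle | hle
  · exact chain_le hn hb hM h hm h' hm' hnb hle
  · exact (chain_le hn hb hM h' hm' h hm (nb_symm hnb) hle).symm

/-- leaves of two finest cells containing a common point far from `z` are connected. -/
lemma chain_pt {n d b M : ℕ} (hn : 1 ≤ n) (hb : 2 ≤ b) (hM : 1 ≤ M) {z : Fin d → E n} {K : ℕ}
    (δ : ℝ) (hδ : Real.sqrt n * (b + 1) / (M * 2 ^ K) < δ) {m m' : Fin n → ℤ} {p : E n}
    (hp : ∀ a, p ∉ ball (z a) δ) (hm : m ∈ box n M K) (hm' : m' ∈ box n M K)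
    (h : InCell M K m p) (h' : InCell M K m' p) :
    Conn b M z K (leaf b M z K m) (leaf b M z K m') := by
  classical
  have main : ∀ s : Finset (Fin n), Conn b M z K (leaf b M z K m)
      (leaf b M z K (fun i => if i ∈ s then m' i else m i)) := by
    have hbx : ∀ s : Finset (Fin n), (fun i => if i ∈ s then m' i else m i) ∈ box n M K := by
      intro s
      simp only [box, Fintype.mem_piFinset] at *
      intro i
      split_ifs
      exacts [hm' i, hm i]
    have hic : ∀ s : Finset (Fin n), InCell M K (fun i => if i ∈ s then m' i else m i) p := by
      intro s i
      simp only
      split_ifs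
      exacts [h' i, h i]
    intro s
    induction s using Finset.induction_on with
    | empty =>
      have : (fun i => if i ∈ (∅ : Finset (Fin n)) then m' i else m i) = m := by
        funext i; simp
      rw [this]
      exact Relation.ReflTransGen.refl
    | insert a s ha ih =>
      refine ih.trans (chain_nb hn hb hM (incell_good hM z δ hδ hp (hic _)) (hbx _)
        (incell_good hM z δ hδ hp (hic _)) (hbx _) ⟨a, ?_, ?_⟩)
      · intro j hj
        simp [Finset.mem_insert, hj]
      · simp only [ha, if_false, Finset.mem_insert_self, if_true]
        have hs := sz_pos hM K
        have h1 := h a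
        have h2 := h' a
        have e1 : (m a : ℝ) ≤ m' a + 1 := le_of_mul_le_mul_right (by linarith) hs
        have e2 : (m' a : ℝ) ≤ m a + 1 := le_of_mul_le_mul_right (by linarith) hs
        have e1' : m a ≤ m' a + 1 := by exact_mod_cast e1
        have e2' : m' a ≤ m a + 1 := by exact_mod_cast e2
        rw [abs_le]; omega
  simpa using main Finset.univ

lemma exists_cell {n M K : ℕ} (hM : 1 ≤ M) (p : E n) (hp : ∀ i, |p i| ≤ 1) :
    ∃ m ∈ box n M K, InCell M K m p := by
  have hs := sz_pos hM K
  have hN : (1 : ℤ) ≤ (M : ℤ) * 2 ^ K := by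
    have : 1 ≤ M * 2 ^ K := Nat.mul_pos hM (by positivity)
    exact_mod_cast this
  have hNs : (((M : ℤ) * 2 ^ K : ℤ) : ℝ) * sz M K = 2 := by
    have : (0 : ℝ) < M := by exact_mod_cast hM
    unfold sz; push_cast; field_simp
  obtain ⟨N, hNN⟩ : ∃ N, N = (M : ℤ) * 2 ^ K := ⟨_, rfl⟩
  rw [← hNN] at hN hNs
  have key : ∀ i, ∃ t : ℤ, (0 ≤ t ∧ t < N) ∧ (t : ℝ) * sz M K ≤ p i + 1 ∧
      p i + 1 ≤ ((t : ℝ) + 1) * sz M K := by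
    intro i
    have h1 := abs_le.1 (hp i)
    obtain ⟨w, hw⟩ : ∃ w, w = (p i + 1) / sz M K := ⟨_, rfl⟩
    have hx : p i + 1 = w * sz M K := by rw [hw]; field_simp
    have hw0 : 0 ≤ w := by rw [hw]; apply div_nonneg <;> linarith
    have hwN : w ≤ N := le_of_mul_le_mul_right (by linarith) hs
    rcases hwN.eq_or_lt with h | h
    · refine ⟨N - 1, ⟨by omega, by omega⟩, ?_, ?_⟩
      · rw [hx, h]; push_cast; nlinarith
      · rw [hx, h]; push_cast; nlinarith
    · refine ⟨⌊w⌋, ⟨Int.floor_nonneg.2 hw0, Int.floor_lt.2 h⟩, ?_, ?_⟩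
      · rw [hx]; exact mul_le_mul_of_nonneg_right (Int.floor_le w) hs.le
      · rw [hx]; exact mul_le_mul_of_nonneg_right (Int.lt_floor_add_one w).le hs.le
  choose m hm1 hm2 using key
  refine ⟨m, ?_, hm2⟩
  simp only [box, Fintype.mem_piFinset, Finset.mem_Ico]
  rw [← hNN]
  exact hm1

lemma path_of {α : Type*} {R : α → α → Prop} (hs : ∀ a b, R a b → R b a) {p q : α}
    (h : Relation.ReflTransGen R p q) :
    ∃ (l : ℕ) (f : ℕ → α), (∀ i ≤ l, ∀ j ≤ l, f i = f j → i = j) ∧ f 0 = p ∧ f l = q ∧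
      ∀ i < l, R (f i) (f (i + 1)) := by
  classical
  have hr : (SimpleGraph.fromRel R).Reachable p q := by
    induction h with
    | refl => exact SimpleGraph.Reachable.refl _
    | @tail a c _ h ih =>
      by_cases hac : a = c
      · exact hac ▸ ih
      · exact ih.trans (SimpleGraph.Adj.reachable (by
          rw [SimpleGraph.fromRel_adj]; exact ⟨hac, Or.inl h⟩))
  obtain ⟨w, hw⟩ := hr.exists_isPath
  refine ⟨w.length, w.getVert, ?_, w.getVert_zero, w.getVert_length, ?_⟩
  · intro i hi j hj hij
    exact hw.getVert_injOn hi hj hij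
  · intro i hi
    have := w.adj_getVert_succ hi
    rw [SimpleGraph.fromRel_adj] at this
    rcases this.2 with h | h
    exacts [h, hs _ _ h]

lemma incell_closed {n M K : ℕ} (m : Fin n → ℤ) : IsClosed {p : E n | InCell M K m p} := by
  unfold InCell
  simp only [ofPred_forall, ofPred_and]
  refine isClosed_iInter fun i => IsClosed.inter ?_ ?_
  · exact isClosed_le (by fun_prop) (by fun_prop)
  · exact isClosed_le (by fun_prop) (by fun_prop)

lemma chain_comp {n d b M : ℕ} (hn : 1 ≤ n) (hb : 2 ≤ b) (hM : 1 ≤ M) (z : Fin d → E n) (K : ℕ)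
    (δ : ℝ) (hδ : Real.sqrt n * (b + 1) / (M * 2 ^ K) < δ) (X : Set (E n))
    (hX1 : ∀ p ∈ X, ∀ i, |p i| ≤ 1) (hX2 : ∀ p ∈ X, ∀ a, p ∉ ball (z a) δ) (v w : E n)
    (hv : v ∈ X) (hw : w ∈ connectedComponentIn X v) :
    ∃ m ∈ box n M K, ∃ m' ∈ box n M K, InCell M K m v ∧ InCell M K m' w ∧
      Conn b M z K (leaf b M z K m) (leaf b M z K m') := by
  obtain ⟨m, hm, hmv⟩ := exists_cell (K := K) hM v (hX1 v hv)
  have hwX := connectedComponentIn_subset X v hw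
  obtain ⟨m', hm', hmw⟩ := exists_cell (K := K) hM w (hX1 w hwX)
  refine ⟨m, hm, m', hm', hmv, hmw, ?_⟩
  by_contra hcon
  set A : Set (E n) := ⋃ q ∈ {q | q ∈ box n M K ∧ Conn b M z K (leaf b M z K m) (leaf b M z K q)},
    {p : E n | InCell M K q p} with hA
  set B : Set (E n) := ⋃ q ∈ {q | q ∈ box n M K ∧ ¬ Conn b M z K (leaf b M z K m) (leaf b M z K q)},
    {p : E n | InCell M K q p} with hB
  have hAc : IsClosed A := Set.Finite.isClosed_biUnion
    ((box n M K).finite_toSet.subset fun q hq => hq.1) (fun q _ => incell_closed q)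
  have hBc : IsClosed B := Set.Finite.isClosed_biUnion
    ((box n M K).finite_toSet.subset fun q hq => hq.1) (fun q _ => incell_closed q)
  have hpre : IsPreconnected (connectedComponentIn X v) := isPreconnected_connectedComponentIn
  obtain ⟨p, hp, hpA, hpB⟩ := isPreconnected_closed_iff.1 hpre A B hAc hBc
    (by
      intro p hp
      obtain ⟨q, hq, hqp⟩ := exists_cell (K := K) hM p (hX1 p (connectedComponentIn_subset X v hp))
      by_cases hc : Conn b M z K (leaf b M z K m) (leaf b M z K q)
      · left; exact mem_biUnion (show q ∈ {q | _} from ⟨hq, hc⟩) hqp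
      · right; exact mem_biUnion (show q ∈ {q | _} from ⟨hq, hc⟩) hqp)
    ⟨v, mem_connectedComponentIn hv, mem_biUnion (show m ∈ {q | _} from ⟨hm, .refl⟩) hmv⟩
    ⟨w, hw, mem_biUnion (show m' ∈ {q | _} from ⟨hm', hcon⟩) hmw⟩
  simp only [hA, hB, mem_iUnion, mem_ofPred_eq, exists_prop] at hpA hpB
  obtain ⟨q, ⟨hq1, hq2⟩, hq3⟩ := hpA
  obtain ⟨q', ⟨hq1', hq2'⟩, hq3'⟩ := hpB
  exact hq2' (hq2.trans (chain_pt hn hb hM δ hδ (hX2 p (connectedComponentIn_subset X v hp))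
    hq1 hq1' hq3 hq3'))

lemma leaf_ball {n d b M : ℕ} (hM : 1 ≤ M) (z : Fin d → E n) {K : ℕ} {m : Fin n → ℤ} {p : E n}
    (hg : Good b M z K m) (h : InCell M K m p) :
    p ∈ closedBall (cen M (leaf b M z K m).1 (leaf b M z K m).2) (rad n M (leaf b M z K m).1) :=
  incell_ball hM (anc_incell hM h (lv_spec hg).1)

theorem core (n d : ℕ) (hn : 1 ≤ n) (γ : ℝ) (z : Fin d → E n) (δ : ℝ)
    (b M K : ℕ) (hb : 2 ≤ b) (hM : 1 ≤ M) (hy : γ * rho n < b)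
    (hδ : Real.sqrt n * (b + 1) / (M * 2 ^ K) < δ) (X : Set (E n))
    (hX1 : ∀ p ∈ X, ∀ i, |p i| ≤ 1) (hX2 : ∀ p ∈ X, ∀ a, p ∉ ball (z a) δ) :
    ∃ (κ : ℕ) (c : Fin κ → EuclideanSpace ℝ (Fin n)) (r : Fin κ → ℝ),
      (∀ j, 0 < r j) ∧
      (∀ j, closedBall (c j) (γ * r j) ⊆ {x | ∀ i, x ≠ z i}) ∧
      (X ⊆ ⋃ j, closedBall (c j) (r j)) ∧
      κ ≤ M ^ n + K * (d * cnt n b) ∧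
      (∀ v w : EuclideanSpace ℝ (Fin n), v ∈ X →
        w ∈ connectedComponentIn X v →
        ∃ (l : ℕ) (hl : 0 < l) (js : Fin l → Fin κ), Function.Injective js ∧
          v ∈ closedBall (c (js ⟨0, hl⟩)) (r (js ⟨0, hl⟩)) ∧
          w ∈ closedBall (c (js ⟨l - 1, by omega⟩)) (r (js ⟨l - 1, by omega⟩)) ∧
          ∀ m : ℕ, (h : m + 1 < l) →
            (closedBall (c (js ⟨m, by omega⟩)) (r (js ⟨m, by omega⟩)) ∩
              closedBall (c (js ⟨m + 1, h⟩)) (r (js ⟨m + 1, h⟩))).Nonempty ∧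
            (r (js ⟨m, by omega⟩) / r (js ⟨m + 1, h⟩) = 1 / 2 ∨
             r (js ⟨m, by omega⟩) / r (js ⟨m + 1, h⟩) = 1 ∨
             r (js ⟨m, by omega⟩) / r (js ⟨m + 1, h⟩) = 2) ∧
            ∃ c' : EuclideanSpace ℝ (Fin n),
              closedBall c' (min (r (js ⟨m, by omega⟩)) (r (js ⟨m + 1, h⟩)) / 3) ⊆
                closedBall (c (js ⟨m, by omega⟩)) (r (js ⟨m, by omega⟩)) ∩
                closedBall (c (js ⟨m + 1, h⟩)) (r (js ⟨m + 1, h⟩))) := by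
  classical
  set F := FF b M z K with hF
  let e : F ≃ Fin F.card := F.equivFin
  refine ⟨F.card, fun j => cen M (e.symm j).1.1 (e.symm j).1.2, fun j => rad n M (e.symm j).1.1,
    fun j => rad_pos hM _, ?_, ?_, card_FF hb hM z K, ?_⟩
  · intro j
    have h1 := (mem_FF.1 (e.symm j).2).2
    have h2 := (Finset.mem_filter.1 h1).2.1
    exact good_avoid hM z _ _ γ hy h2
  · intro p hp
    obtain ⟨m, hm, hmp⟩ := exists_cell (K := K) hM p (hX1 p hp)
    have hg := incell_good hM z δ hδ (hX2 p hp) hmp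
    rw [mem_iUnion]
    refine ⟨e ⟨leaf b M z K m, leaf_mem hg hm⟩, ?_⟩
    simp only [Equiv.symm_apply_apply]
    exact leaf_ball hM z hg hmp
  · intro v w hv hw
    obtain ⟨m, hm, m', hm', hmv, hmw, hc⟩ := chain_comp hn hb hM z K δ hδ X hX1 hX2 v w hv hw
    have hgv := incell_good hM z δ hδ (hX2 v hv) hmv
    have hgw := incell_good hM z δ hδ (hX2 w (connectedComponentIn_subset X v hw)) hmw
    obtain ⟨l, f, f1, f2, f3, f4⟩ := path_of (fun _ _ h => RR.symm h) hc
    have hmem : ∀ i ≤ l, f i ∈ F := by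
      intro i hi
      rcases Nat.eq_zero_or_pos i with rfl | h0
      · rw [f2]; exact leaf_mem hgv hm
      · have := (f4 (i - 1) (by omega)).2.1
        rwa [Nat.sub_add_cancel h0] at this
    refine ⟨l + 1, by omega, fun i => e ⟨f i.1, hmem i.1 (by omega)⟩, ?_, ?_, ?_, ?_⟩
    · intro i j hij
      have := congrArg Subtype.val (e.injective hij)
      exact Fin.ext (f1 _ (by omega) _ (by omega) this)
    · simp only [Equiv.symm_apply_apply, f2]
      exact leaf_ball hM z hgv hmv
    · simp only [Equiv.symm_apply_apply, Nat.add_sub_cancel, f3]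
      exact leaf_ball hM z hgw hmw
    · intro i hi
      simp only [Equiv.symm_apply_apply]
      obtain ⟨-, -, h1, c', h2⟩ := f4 i (by omega)
      refine ⟨⟨c', h2 ?_⟩, h1, c', h2⟩
      apply mem_closedBall_self
      have := rad_pos (n := n) hM (f i).1
      have := rad_pos (n := n) hM (f (i + 1)).1
      positivity

lemma sqrt_two_bounds : (1.4 : ℝ) ≤ Real.sqrt 2 ∧ Real.sqrt 2 ≤ 3 / 2 := by
  constructor
  · apply Real.le_sqrt_of_sq_le; norm_num
  · rw [Real.sqrt_le_left (by norm_num)]; norm_num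

lemma rho_one : rho 1 = 3 / 2 := by
  unfold rho; rw [max_eq_right]; norm_num

lemma rho_two : rho 2 = 3 / 2 := by
  unfold rho; rw [max_eq_right]; exact_mod_cast sqrt_two_bounds.2

lemma sqrt_three_le {n : ℕ} (hn : 3 ≤ n) : (5 / 3 : ℝ) ≤ Real.sqrt n := by
  apply Real.le_sqrt_of_sq_le
  have : (3 : ℝ) ≤ n := by exact_mod_cast hn
  norm_num; linarith

lemma rho_three {n : ℕ} (hn : 3 ≤ n) : rho n = Real.sqrt n := by
  unfold rho; rw [max_eq_left]
  have := sqrt_three_le hn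
  linarith

lemma b_succ_le {n b : ℕ} {γ : ℝ} (hn : 1 ≤ n) (hγ : 1 < γ) (hb : 2 ≤ b)
    (h1 : (b : ℝ) - 1 ≤ γ * rho n) : (b : ℝ) + 1 ≤ 3 * Real.sqrt n * γ := by
  obtain rfl | rfl | h3 : n = 1 ∨ n = 2 ∨ 3 ≤ n := by omega
  · rw [rho_one] at h1
    rcases hb.eq_or_lt with rfl | h
    · norm_num; linarith
    · have : (3 : ℝ) ≤ b := by exact_mod_cast h
      norm_num; linarith
  · rw [rho_two] at h1
    have := sqrt_two_bounds.1
    norm_num at this ⊢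
    nlinarith
  · rw [rho_three h3] at h1
    have := sqrt_three_le h3
    nlinarith

lemma cnt_le {n b : ℕ} {γ : ℝ} (hn : 1 ≤ n) (hγ : 1 < γ) (hb : 2 ≤ b)
    (h1 : (b : ℝ) - 1 ≤ γ * rho n) (h2 : γ * rho n < b) :
    (cnt n b : ℝ) ≤ (3 * Real.sqrt n * γ) ^ n := by
  have hb' : (2 : ℝ) ≤ b := by exact_mod_cast hb
  obtain rfl | rfl | h3 : n = 1 ∨ n = 2 ∨ 3 ≤ n := by omega
  · rw [rho_one] at h1
    rcases hb.eq_or_lt with rfl | h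
    · norm_num [cnt]; linarith
    · have h' : b ≠ 2 := by omega
      have : cnt 1 b = b := by simp [cnt, h']; omega
      rw [this]
      norm_num; linarith
  · rw [rho_two] at h1
    have e : (3 * Real.sqrt (2 : ℕ) * γ) ^ 2 = 18 * γ ^ 2 := by
      rw [mul_pow, mul_pow, Real.sq_sqrt (by positivity)]; norm_num
    rw [e]
    rcases hb.eq_or_lt with rfl | h
    · norm_num [cnt]; nlinarith
    · have h' : b ≠ 2 := by omega
      have : cnt 2 b = 3 * b ^ 2 := by simp [cnt, h', mul_pow]; omega
      rw [this]
      have h3 : (3 : ℝ) ≤ b := by exact_mod_cast h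
      push_cast
      have : (b : ℝ) ≤ 9 / 4 * γ := by linarith
      nlinarith
  · rw [rho_three h3] at h1 h2
    have hs := sqrt_three_le h3
    rcases hb.eq_or_lt with rfl | h
    · have h5 : (5 : ℝ) ≤ 3 * Real.sqrt n * γ := by nlinarith
      have hn3 : n = 3 := by
        by_contra hne
        have h4 : (4 : ℝ) ≤ n := by exact_mod_cast (by omega : 4 ≤ n)
        have : (2 : ℝ) ≤ Real.sqrt n := by
          apply Real.le_sqrt_of_sq_le
          rw [show ((2 : ℝ) ^ 2) = 4 by norm_num]
          exact h4
        norm_num at h2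
        nlinarith
      subst hn3
      calc ((cnt 3 2 : ℕ) : ℝ) ≤ 5 ^ 3 := by norm_num [cnt]
        _ ≤ _ := by gcongr
    · have h' : b ≠ 2 := by omega
      have hh : (3 : ℝ) ≤ b := by exact_mod_cast h
      have : cnt n b ≤ (2 * b) ^ n := by simp [cnt, h']
      calc (cnt n b : ℝ) ≤ (2 * b) ^ n := by exact_mod_cast this
        _ ≤ _ := by
          apply pow_le_pow_left₀ (by positivity)
          linarith

lemma numeric (n d : ℕ) (hn : 1 ≤ n) (hd : 1 ≤ d) (γ : ℝ) (hγ : 1 < γ)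
    (δ : ℝ) (hδ0 : 0 < δ) (hδ1 : δ < 1) :
    ∃ b M K : ℕ, 2 ≤ b ∧ 1 ≤ M ∧ γ * rho n < b ∧
      Real.sqrt n * (b + 1) / (M * 2 ^ K) < δ ∧
      ((M ^ n + K * (d * cnt n b) : ℕ) : ℝ) ≤
        (d : ℝ) * (3 * Real.sqrt n * γ) ^ n * Real.logb 2 (3 * n * γ / δ) := by
  have hn' : (1 : ℝ) ≤ n := by exact_mod_cast hn
  have hd' : (1 : ℝ) ≤ d := by exact_mod_cast hd
  have hrho := (rho_ge n).2
  have hs1 : 1 ≤ Real.sqrt n := Real.one_le_sqrt.2 hn'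
  have hss : Real.sqrt n * Real.sqrt n = n := Real.mul_self_sqrt (by positivity)
  have hx3 : 3 < 3 * n * γ / δ := by
    rw [lt_div_iff₀ hδ0]; nlinarith
  obtain ⟨b, hbdef⟩ : ∃ b, b = ⌊γ * rho n⌋₊ + 1 := ⟨_, rfl⟩
  have h2 : γ * rho n < b := by rw [hbdef]; exact_mod_cast Nat.lt_floor_add_one _
  have h1 : (b : ℝ) - 1 ≤ γ * rho n := by
    rw [hbdef]; push_cast
    have := Nat.floor_le (show 0 ≤ γ * rho n by nlinarith)
    linarith
  have hb : 2 ≤ b := by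
    have : (1 : ℝ) < b := by nlinarith
    exact_mod_cast this
  have hbs := b_succ_le hn hγ hb h1
  have hcnt := cnt_le hn hγ hb h1 h2
  obtain ⟨L, hL1, hL2⟩ := exists_nat_pow_near (show 1 ≤ 3 * n * γ / δ by linarith)
    (show (1 : ℝ) < 2 by norm_num)
  obtain ⟨K, rfl⟩ : ∃ K, L = K + 1 := by
    rcases L with _ | K
    · norm_num at hL2; linarith
    · exact ⟨K, rfl⟩
  have hlog : ((K : ℝ) + 1) ≤ Real.logb 2 (3 * n * γ / δ) := by
    rw [Real.le_logb_iff_rpow_le (by norm_num) (by linarith)]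
    exact_mod_cast hL1
  have hK0 : (0 : ℝ) ≤ K := by positivity
  have hp : (0 : ℝ) < 2 ^ K := by positivity
  by_cases h4 : 4 ≤ 3 * Real.sqrt n * γ
  · refine ⟨b, 4, K, hb, by norm_num, h2, ?_, ?_⟩
    · rw [div_lt_iff₀ (by positivity)]
      rw [div_lt_iff₀ hδ0, pow_succ, pow_succ] at hL2
      push_cast
      nlinarith
    · push_cast
      have hP : (4 : ℝ) ^ n ≤ (3 * Real.sqrt n * γ) ^ n := by gcongr
      have hP0 : (0 : ℝ) < 4 ^ n := by positivity
      generalize (3 * Real.sqrt n * γ) ^ n = P at *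
      calc (4 : ℝ) ^ n + K * (d * cnt n b) ≤ d * P + K * (d * P) := by
            gcongr
            nlinarith
        _ = d * P * (K + 1) := by ring
        _ ≤ _ := by
          have : 0 ≤ d * P := by nlinarith
          gcongr
  · have hn1 : n = 1 := by
      by_contra hne
      have : (1.4 : ℝ) ≤ Real.sqrt n := by
        refine sqrt_two_bounds.1.trans (Real.sqrt_le_sqrt ?_)
        exact_mod_cast (by omega : 2 ≤ n)
      norm_num at this
      nlinarith
    subst hn1
    rw [rho_one] at h1
    norm_num at h4
    have hb2 : b = 2 := by
      have : (b : ℝ) < 3 := by linarith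
      have : b < 3 := by exact_mod_cast this
      omega
    subst hb2
    have hc : cnt 1 2 = 3 := by norm_num [cnt]
    by_cases hM : 3 * γ / δ < 3 * 2 ^ K
    · refine ⟨2, 3, K, le_rfl, by norm_num, h2, ?_, ?_⟩
      · rw [div_lt_iff₀ (by positivity)]
        rw [div_lt_iff₀ hδ0] at hM
        norm_num
        nlinarith
      · rw [hc]
        norm_num at hlog ⊢
        calc (3 : ℝ) + K * (d * 3) ≤ d * (3 * 1) * (K + 1) := by nlinarith
          _ ≤ d * (3 * γ) * Real.logb 2 (3 * γ / δ) := by gcongr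
    · refine ⟨2, 4, K, le_rfl, by norm_num, h2, ?_, ?_⟩
      · rw [div_lt_iff₀ (by positivity)]
        rw [div_lt_iff₀ hδ0, pow_succ, pow_succ] at hL2
        norm_num at hL2 ⊢
        nlinarith
      · rw [hc]
        have hl : (K : ℝ) + 1 + 1 / 3 ≤ Real.logb 2 (3 * γ / δ) := by
          have e1 : Real.logb 2 ((3 / 2) * 2 ^ (K + 1)) ≤ Real.logb 2 (3 * γ / δ) := by
            apply Real.logb_le_logb_of_le (by norm_num) (by positivity)
            rw [pow_succ]; linarith
          have e2 : Real.logb 2 ((3 / 2) * 2 ^ (K + 1)) = Real.logb 2 (3 / 2) + (K + 1) := by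
            rw [Real.logb_mul (by norm_num) (by positivity), Real.logb_pow,
              Real.logb_self_eq_one (by norm_num)]
            push_cast; ring
          have e3 : (1 : ℝ) ≤ 3 * Real.logb 2 (3 / 2) := by
            have : Real.logb 2 ((3 / 2) ^ 3) = 3 * Real.logb 2 (3 / 2) := by
              rw [Real.logb_pow]; norm_num
            rw [← this, Real.le_logb_iff_rpow_le (by norm_num) (by norm_num)]
            norm_num
          linarith
        norm_num at hl ⊢
        calc (4 : ℝ) + K * (d * 3) ≤ d * (3 * 1) * (K + 1 + 1 / 3) := by nlinarith
          _ ≤ d * (3 * γ) * Real.logb 2 (3 * γ / δ) := by gcongr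

end Whit

/-- Whitney-type covering theorem: for `n, d ≥ 1`, `γ > 1`, points `z₁, …, z_d ∈ ℝⁿ` and
`0 < δ < 1`, there is a `γ`-doubling ball covering of `Q_δ = Q \ U_δ` (the unit cube minus
the open `δ`-neighborhood of the points) in `ℝⁿ \ {z₁, …, z_d}` with at most
`d (3√n γ)ⁿ log₂(3nγ/δ)` balls; moreover any two points in the same connected component of
`Q_δ` are joined by a chain of pairwise distinct balls of the covering in which consecutive
balls intersect, the ratio of consecutive radii is `1/2`, `1`, or `2`, and each consecutive
intersection contains a ball of radius at least `1/3` of the smaller radius. -/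
theorem whitney_doubling_covering (n d : ℕ) (hn : 1 ≤ n) (hd : 1 ≤ d)
    (γ : ℝ) (hγ : 1 < γ) (z : Fin d → EuclideanSpace ℝ (Fin n))
    (δ : ℝ) (hδ0 : 0 < δ) (hδ1 : δ < 1) :
    ∃ (κ : ℕ) (c : Fin κ → EuclideanSpace ℝ (Fin n)) (r : Fin κ → ℝ),
      (∀ j, 0 < r j) ∧
      -- each ball, and its `γ` times larger concentric ball, avoid the points `z i`
      (∀ j, closedBall (c j) (γ * r j) ⊆ {x | ∀ i, x ≠ z i}) ∧
      -- the balls cover `Q_δ`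
      (unitCube n \ (⋃ i, ball (z i) δ) ⊆ ⋃ j, closedBall (c j) (r j)) ∧
      -- cardinality bound
      ((κ : ℝ) ≤ (d : ℝ) * (3 * Real.sqrt n * γ) ^ n * Real.logb 2 (3 * n * γ / δ)) ∧
      -- chain property
      (∀ v w : EuclideanSpace ℝ (Fin n), v ∈ unitCube n \ (⋃ i, ball (z i) δ) →
        w ∈ connectedComponentIn (unitCube n \ (⋃ i, ball (z i) δ)) v →
        ∃ (l : ℕ) (hl : 0 < l) (js : Fin l → Fin κ), Function.Injective js ∧
          v ∈ closedBall (c (js ⟨0, hl⟩)) (r (js ⟨0, hl⟩)) ∧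
          w ∈ closedBall (c (js ⟨l - 1, by omega⟩)) (r (js ⟨l - 1, by omega⟩)) ∧
          ∀ m : ℕ, (h : m + 1 < l) →
            (closedBall (c (js ⟨m, by omega⟩)) (r (js ⟨m, by omega⟩)) ∩
              closedBall (c (js ⟨m + 1, h⟩)) (r (js ⟨m + 1, h⟩))).Nonempty ∧
            (r (js ⟨m, by omega⟩) / r (js ⟨m + 1, h⟩) = 1 / 2 ∨
             r (js ⟨m, by omega⟩) / r (js ⟨m + 1, h⟩) = 1 ∨
             r (js ⟨m, by omega⟩) / r (js ⟨m + 1, h⟩) = 2) ∧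
            ∃ c' : EuclideanSpace ℝ (Fin n),
              closedBall c' (min (r (js ⟨m, by omega⟩)) (r (js ⟨m + 1, h⟩)) / 3) ⊆
                closedBall (c (js ⟨m, by omega⟩)) (r (js ⟨m, by omega⟩)) ∩
                closedBall (c (js ⟨m + 1, h⟩)) (r (js ⟨m + 1, h⟩))) := by
  obtain ⟨b, M, K, hb, hM, hy, hK, hcard⟩ := Whit.numeric n d hn hd γ hγ δ hδ0 hδ1
  obtain ⟨κ, c, r, h1, h2, h3, h4, h5⟩ := Whit.core n d hn γ z δ b M K hb hM hy hK
    (unitCube n \ (⋃ i, ball (z i) δ)) (fun p hp => hp.1)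
    (fun p hp a ha => hp.2 (mem_iUnion.2 ⟨a, ha⟩))
  exact ⟨κ, c, r, h1, h2, h3, le_trans (by exact_mod_cast h4) hcard, h5⟩
end
end

section
/- For every positive integer p there exists a constant A'_p > 0, depending only on p, with the following property. Let 0 < β < α < 1, let D be an open disk in ℂ, and let f be analytic and p-valent in D. Then sup_{αD} |f| ≤ c_p(α, β) · sup_{βD} |f|, where αD and βD denote the concentric disks of radii scaled, respectively, by α and β, and c_p(α, β) = ( (p+1)·α^p + A'_p/(1−α)^{2p+1} ) / β^p. -/
open Metric Set

noncomputable section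

/-- `f` is `p`-valent in `W`: for every `c ∈ ℂ` the equation `f z = c` has at most `p`
solutions in `W`. -/
def PValentOn (f : ℂ → ℂ) (W : Set ℂ) (p : ℕ) : Prop :=
  ∀ c : ℂ, ∀ s : Finset ℂ, (∀ t ∈ s, t ∈ W ∧ f t = c) → s.card ≤ p

lemma aux_jensen_sub {g : ℂ → ℂ} {c : ℂ} {R : ℝ} (hR : 0 < R)
    (hg : AnalyticOnNhd ℂ g (closedBall c R)) (h0 : g c ≠ 0) :
    Real.log ‖g c‖ ≤ Real.circleAverage (fun z => Real.log ‖g z‖) c R := by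
  have hR' : |R| = R := abs_of_pos hR
  have h := AnalyticOnNhd.circleAverage_log_norm (c := c) (R := R) (f := g) hR.ne'
    (by rwa [hR']) h0
  rw [h, hR']
  have : 0 ≤ ∑ᶠ u, (MeromorphicOn.divisor g (closedBall c R) u : ℝ) * Real.log (R * ‖c - u‖⁻¹) := by
    apply finsum_nonneg
    intro u
    by_cases hu : u ∈ closedBall c R
    · have h1 : (0:ℝ) ≤ MeromorphicOn.divisor g (closedBall c R) u := by
        exact_mod_cast MeromorphicOn.AnalyticOnNhd.divisor_nonneg hg u
      by_cases huc : u = c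
      · subst huc; simp
      · apply mul_nonneg h1
        apply Real.log_nonneg
        have : 0 < ‖c - u‖ := norm_pos_iff.mpr (sub_ne_zero.mpr (Ne.symm huc))
        rw [← div_eq_mul_inv, one_le_div this]
        rw [mem_closedBall, dist_eq_norm, norm_sub_rev] at hu
        exact hu
    · simp [hu]
  linarith

lemma aux_jensen_up {g : ℂ → ℂ} {p : ℕ} {β t : ℝ} (hβ : 0 < β) (hβ1 : β ≤ 1)
    (ht : 0 < t) (ht1 : t < 1)
    (hg : AnalyticOnNhd ℂ g (ball 0 1)) (h0 : ∀ z ∈ ball (0:ℂ) β, g z ≠ 0)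
    (hs : ∀ z ∈ ball (0:ℂ) 1, g z = 0 → deriv g z ≠ 0)
    (hp : ∀ s : Finset ℂ, (∀ z ∈ s, z ∈ ball (0:ℂ) 1 ∧ g z = 0) → s.card ≤ p) :
    Real.circleAverage (fun z => Real.log ‖g z‖) 0 t ≤ Real.log ‖g 0‖ + p * Real.log (1 / β) := by
  have hR' : |t| = t := abs_of_pos ht
  have hsub : closedBall (0:ℂ) t ⊆ ball 0 1 := closedBall_subset_ball ht1
  have hgt := hg.mono hsub
  have h := AnalyticOnNhd.circleAverage_log_norm (c := 0) (R := t) (f := g) ht.ne'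
    (by rwa [hR']) (h0 0 (mem_ball_self hβ))
  rw [h, hR']
  have hfin := (MeromorphicOn.divisor g (closedBall 0 t)).finiteSupport (isCompact_closedBall 0 t)
  have key : ∀ u, MeromorphicOn.divisor g (closedBall 0 t) u ≠ 0 → u ∈ ball (0:ℂ) 1 ∧ g u = 0 ∧
      u ∈ closedBall 0 t ∧ MeromorphicOn.divisor g (closedBall 0 t) u = 1 := by
    intro u hu
    have hut : u ∈ closedBall (0:ℂ) t := by
      by_contra hc; exact hu (by simp [hc])
    have hga := hgt u hut
    rw [MeromorphicOn.AnalyticOnNhd.divisor_apply hgt hut] at hu ⊢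
    have hgu : g u = 0 := by
      by_contra hc
      exact hu (by simp [hga.analyticOrderAt_eq_zero.mpr hc])
    refine ⟨hsub hut, hgu, hut, ?_⟩
    have : analyticOrderAt g u = 1 := by
      have := hga.analyticOrderAt_sub_eq_one_of_deriv_ne_zero (hs u (hsub hut) hgu)
      simpa [hgu] using this
    simp [this]
  have hlog : 0 ≤ Real.log (1/β) := Real.log_nonneg (by rw [le_div_iff₀ hβ]; linarith)
  have : ∑ᶠ u, (MeromorphicOn.divisor g (closedBall 0 t) u : ℝ) * Real.log (t * ‖0 - u‖⁻¹)
      ≤ p * Real.log (1/β) := by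
    rw [finsum_eq_sum_of_support_subset (s := hfin.toFinset) _ (by intro x; simp +contextual)]
    calc _ ≤ ∑ u ∈ hfin.toFinset, Real.log (1/β) := by
          apply Finset.sum_le_sum
          intro u hu
          obtain ⟨h1, h2, h3, h4⟩ := key u (by simpa using hu)
          rw [h4]
          have hub : β ≤ ‖u‖ := by
            by_contra hc
            exact h0 u (by simpa using hc) h2
          have : 0 < ‖u‖ := by linarith
          simp only [Int.cast_one, one_mul, zero_sub, norm_neg]
          apply Real.log_le_log (by positivity)
          rw [← div_eq_mul_inv]
          gcongr
      _ = hfin.toFinset.card * Real.log (1/β) := by simp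
      _ ≤ _ := by
        gcongr
        apply hp
        intro z hz
        obtain ⟨h1, h2, h3, h4⟩ := key z (by simpa using hz)
        exact ⟨h1, h2⟩
  linarith

open MeasureTheory in
lemma aux_polar {u : ℂ → ℝ} {c : ℂ} {R : ℝ} (hm : Measurable ((ball c R).indicator u))
    (h0 : ∀ z ∈ ball c R, 0 ≤ u z) (hci : ∀ t ∈ Ioo 0 R, CircleIntegrable u c t) :
    ∫⁻ z in ball c R, ENNReal.ofReal (u z) =
      ∫⁻ t in Ioo 0 R, ENNReal.ofReal (2 * Real.pi * t * Real.circleAverage u c t) := by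
  have e1 : ∫⁻ z in ball c R, ENNReal.ofReal (u z) =
      ∫⁻ z, ENNReal.ofReal ((ball c R).indicator u z) := by
    rw [← lintegral_indicator measurableSet_ball]
    congr 1; ext z
    by_cases hz : z ∈ ball c R <;> simp [hz]
  rw [e1, ← lintegral_add_right_eq_self _ c, ← Complex.lintegral_comp_polarCoord_symm]
  have e2 : polarCoord.target = Ioi (0:ℝ) ×ˢ Ioo (-Real.pi) Real.pi := rfl
  rw [e2, Measure.volume_eq_prod, ← Measure.prod_restrict, lintegral_prod]
  · have hz : Ioi (0:ℝ) = Ioo 0 R ∪ (Ioi 0 ∩ Ici R) := by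
      ext x; simp only [mem_Ioi, mem_union, mem_Ioo, mem_inter_iff, mem_Ici]
      constructor
      · intro h; rcases lt_or_ge x R with h' | h'
        · exact Or.inl ⟨h, h'⟩
        · exact Or.inr ⟨h, h'⟩
      · rintro (h | h) <;> exact h.1
    have hn : ∀ t θ : ℝ, Complex.polarCoord.symm (t, θ) + c = circleMap c t θ := by
      intro t θ
      rw [circleMap, Complex.exp_mul_I]; simp [add_comm]
    simp only [hn]
    rw [hz, lintegral_union (measurableSet_Ioi.inter measurableSet_Ici)
      (by rw [Set.disjoint_left]; rintro x hx hx'; exact absurd hx.2 (not_lt.mpr hx'.2))]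
    have z2 : ∫⁻ t in Ioi 0 ∩ Ici R, ∫⁻ θ in Ioo (-Real.pi) Real.pi,
        ENNReal.ofReal t • ENNReal.ofReal ((ball c R).indicator u (circleMap c t θ)) = 0 := by
      rw [setLIntegral_congr_fun (g := fun _ => 0) (measurableSet_Ioi.inter measurableSet_Ici)]
      · simp
      · intro t ht
        have : ∀ θ, circleMap c t θ ∉ ball c R := by
          intro θ; simp [circleMap, dist_eq_norm, abs_of_pos (show 0 < t from ht.1)]
          exact ht.2
        simp [this]
    rw [z2, add_zero]
    apply setLIntegral_congr_fun measurableSet_Ioo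
    intro t ht
    have ht0 : 0 < t := ht.1
    have hmem : ∀ θ, circleMap c t θ ∈ ball c R := by
      intro θ; simp [circleMap, dist_eq_norm, abs_of_pos ht0]; exact ht.2
    simp only [hmem, indicator_of_mem, smul_eq_mul]
    rw [lintegral_const_mul' _ _ (by simp)]
    have hinteg : IntervalIntegrable (fun θ => u (circleMap c t θ)) volume (-Real.pi) Real.pi := by
      have := (hci t ht)
      have hp : Function.Periodic (fun θ => u (circleMap c t θ)) (2 * Real.pi) :=
        (periodic_circleMap c t).comp u
      exact hp.intervalIntegrable₀ (by positivity) this (-Real.pi) Real.pi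
    have hpi : -Real.pi ≤ Real.pi := by linarith [Real.pi_pos]
    rw [restrict_Ioo_eq_restrict_Ioc, ← ofReal_integral_eq_lintegral_ofReal, ← ENNReal.ofReal_mul ht0.le]
    · congr 1
      rw [← intervalIntegral.integral_of_le hpi, Real.circleAverage_eq_integral_add (-Real.pi)]
      have := intervalIntegral.integral_comp_add_right (a := 0) (b := 2 * Real.pi) (fun θ => u (circleMap c t θ)) (-Real.pi)
      rw [this]
      simp only [zero_add, smul_eq_mul]
      rw [show 2 * Real.pi + -Real.pi = Real.pi by ring]
      field_simp
    · exact (intervalIntegrable_iff_integrableOn_Ioc_of_le hpi).mp hinteg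
    · exact Filter.Eventually.of_forall fun θ => h0 _ (hmem θ)
  · apply Measurable.aemeasurable
    simp only [smul_eq_mul]; apply Measurable.fun_mul
    · fun_prop
    · apply ENNReal.measurable_ofReal.comp
      apply hm.comp
      simp only [Complex.polarCoord_symm_apply]
      fun_prop
open MeasureTheory in
lemma aux_det (a : ℂ) :
    |((ContinuousLinearMap.toSpanSingleton ℂ a).restrictScalars ℝ : ℂ →L[ℝ] ℂ).det| = ‖a‖ ^ 2 := by
  have : ((ContinuousLinearMap.toSpanSingleton ℂ a).restrictScalars ℝ : ℂ →L[ℝ] ℂ).det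
      = ‖a‖ ^ 2 := by
    rw [ContinuousLinearMap.det, ← LinearMap.det_toMatrix Complex.basisOneI, Matrix.det_fin_two]
    simp [LinearMap.toMatrix_apply, ← Complex.normSq_eq_norm_sq, Complex.normSq_apply]
  rw [this, abs_of_nonneg (by positivity)]

open MeasureTheory in
lemma aux_area {F : ℂ → ℂ} {Q T : Set ℂ} {p : ℕ} (hQ : MeasurableSet Q)
    (hF : ∀ w ∈ Q, HasStrictDerivAt F (deriv F w) w)
    (hp : ∀ c : ℂ, ∀ s : Finset ℂ, (∀ t ∈ s, t ∈ Q ∧ F t = c) → s.card ≤ p)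
    (hT : MeasurableSet T) (hQT : MapsTo F Q T)
    {ψ : ℂ → ENNReal} (hψ : Measurable ψ) :
    ∫⁻ w in Q, ENNReal.ofReal (‖deriv F w‖ ^ 2) * ψ (F w) ≤ p * ∫⁻ w in T, ψ w := by
  set Q0 : Set ℂ := Q ∩ {w | deriv F w ≠ 0} with hQ0
  have hm0 : MeasurableSet {w | deriv F w ≠ 0} := by
    exact (measurable_deriv F (measurableSet_singleton 0)).compl
  have hQ0m : MeasurableSet Q0 := hQ.inter hm0
  have hinj : ∀ w : ℂ, w ∈ Q0 → ∃ U : Set ℂ, IsOpen U ∧ w ∈ U ∧ InjOn F U := by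
    intro w hw
    have h := hF w hw.1
    have h' := h.hasStrictFDerivAt_equiv hw.2
    exact ⟨(h'.toOpenPartialHomeomorph F).source, (h'.toOpenPartialHomeomorph F).open_source,
      h'.mem_toOpenPartialHomeomorph_source, (h'.toOpenPartialHomeomorph F).injOn⟩
  choose! U hUo hUm hUi using hinj
  have hV : ∃ V : ℕ → Set ℂ, (∀ n, IsOpen (V n) ∧ InjOn F (V n)) ∧ Q0 ⊆ ⋃ n, V n := by
    obtain ⟨t, hts, htc, htu⟩ := TopologicalSpace.countable_cover_nhdsWithin (f := U) (s := Q0)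
      (fun x hx => mem_nhdsWithin_of_mem_nhds ((hUo x hx).mem_nhds (hUm x hx)))
    rcases t.eq_empty_or_nonempty with h | h
    · refine ⟨fun _ => ∅, by simp, ?_⟩
      simpa [h] using htu
    · obtain ⟨e, he⟩ := htc.exists_eq_range h
      refine ⟨fun n => U (e n), fun n => ?_, ?_⟩
      · have : e n ∈ Q0 := hts (by rw [he]; exact mem_range_self n)
        exact ⟨hUo _ this, hUi _ this⟩
      · rw [he] at htu; simpa using htu
  obtain ⟨V, hV1, hV2⟩ := hV
  set E : ℕ → Set ℂ := fun n => Q0 ∩ disjointed V n with hE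
  have hEm : ∀ n, MeasurableSet (E n) := fun n =>
    hQ0m.inter (MeasurableSet.disjointed (fun i => (hV1 i).1.measurableSet) n)
  have hEd : Pairwise (Function.onFun Disjoint E) := fun i j hij =>
    (disjoint_disjointed V hij).mono inter_subset_right inter_subset_right
  have hEi : ∀ n, InjOn F (E n) := fun n =>
    (hV1 n).2.mono (inter_subset_right.trans (disjointed_subset V n))
  have hEU : ⋃ n, E n = Q0 := by
    rw [← inter_iUnion, iUnion_disjointed, inter_eq_left.mpr hV2]
  have hder : ∀ n, ∀ x ∈ E n, HasFDerivWithinAt F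
      ((ContinuousLinearMap.toSpanSingleton ℂ (deriv F x)).restrictScalars ℝ : ℂ →L[ℝ] ℂ) (E n) x := by
    intro n x hx
    exact ((hF x hx.1.1).hasDerivAt.hasFDerivAt.restrictScalars ℝ).hasFDerivWithinAt
  have hIm : ∀ n, MeasurableSet (F '' E n) := fun n =>
    measurable_image_of_fderivWithin (hEm n) (hder n) (hEi n)
  have s1 : ∫⁻ w in Q, ENNReal.ofReal (‖deriv F w‖ ^ 2) * ψ (F w) =
      ∫⁻ w in Q0, ENNReal.ofReal (‖deriv F w‖ ^ 2) * ψ (F w) := by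
    rw [← lintegral_indicator hQ, ← lintegral_indicator hQ0m]
    congr 1; ext w
    by_cases h1 : w ∈ Q <;> by_cases h2 : deriv F w = 0 <;> simp [hQ0, h1, h2, indicator]
  rw [s1, ← hEU, lintegral_iUnion hEm hEd]
  have s2 : ∀ n, ∫⁻ w in E n, ENNReal.ofReal (‖deriv F w‖ ^ 2) * ψ (F w) =
      ∫⁻ w in T, (F '' E n).indicator 1 w * ψ w := by
    intro n
    have := lintegral_image_eq_lintegral_abs_det_fderiv_mul volume (hEm n) (hder n) (hEi n) ψ
    simp only [aux_det] at this
    rw [← this]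
    have hsub : F '' E n ⊆ T := by
      rintro _ ⟨x, hx, rfl⟩; exact hQT hx.1.1
    rw [← lintegral_indicator (hIm n), ← lintegral_indicator hT]
    congr 1; ext w
    by_cases hw : w ∈ F '' E n
    · simp only [indicator_of_mem hw, indicator_of_mem (hsub hw), Pi.one_apply, one_mul]
    · by_cases hw' : w ∈ T
      · rw [indicator_of_notMem hw, indicator_of_mem hw', indicator_of_notMem hw, zero_mul]
      · rw [indicator_of_notMem hw, indicator_of_notMem hw']
  simp only [s2]
  rw [← lintegral_tsum (fun n => ((measurable_one.indicator (hIm n)).fun_mul hψ).aemeasurable),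
    ← lintegral_const_mul _ hψ]
  apply lintegral_mono
  intro w
  simp only [ENNReal.tsum_mul_right]
  gcongr
  rw [ENNReal.tsum_eq_iSup_sum]
  apply iSup_le
  intro I
  classical
  have hc : ∀ n, w ∈ F '' E n → ∃ x, x ∈ E n ∧ F x = w := fun n h => h
  choose! x hx1 hx2 using hc
  set J := I.filter (fun n => w ∈ F '' E n) with hJ
  have hinjx : Set.InjOn x J := by
    intro a ha b hb hab
    simp only [hJ, Finset.coe_filter, mem_setOf_eq] at ha hb
    by_contra hne
    exact (Set.disjoint_left.mp (hEd hne)) (hx1 a ha.2) (hab ▸ hx1 b hb.2)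
  have hcard : (J.image x).card ≤ p := by
    apply hp w
    intro t ht
    obtain ⟨n, hn, rfl⟩ := Finset.mem_image.mp ht
    have hn' := (Finset.mem_filter.mp hn).2
    exact ⟨(hx1 n hn').1.1, hx2 n hn'⟩
  rw [Finset.card_image_of_injOn hinjx] at hcard
  calc ∑ n ∈ I, (F '' E n).indicator (1 : ℂ → ENNReal) w = (J.card : ENNReal) := by
        rw [hJ, Finset.card_filter]
        push_cast
        apply Finset.sum_congr rfl
        intro n _
        by_cases h : w ∈ F '' E n <;> simp only [h, indicator_of_mem, indicator_of_notMem, Pi.one_apply, if_true, if_false, not_false_eq_true]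
        all_goals simp
    _ ≤ p := by exact_mod_cast hcard

open MeasureTheory in
lemma aux_psi {M : ℝ} (hM : 0 ≤ M) :
    ∫⁻ z in closedBall (0:ℂ) M, ENNReal.ofReal (‖z‖ ^ 2 / (1 + ‖z‖ ^ 2) ^ 2) ≤
      ENNReal.ofReal (Real.pi * Real.log (1 + M ^ 2)) := by
  have hc : Continuous fun z : ℂ => ‖z‖ ^ 2 / (1 + ‖z‖ ^ 2) ^ 2 := by
    apply Continuous.div (by fun_prop) (by fun_prop)
    intro z; positivity
  have hae : closedBall (0:ℂ) M =ᵐ[volume] ball (0:ℂ) M := by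
    rcases hM.eq_or_lt with h | h
    · subst h; simp only [closedBall_zero, ball_zero]
      exact ae_eq_empty.mpr (by simp)
    · rw [← ball_union_sphere]
      exact union_ae_eq_left_of_ae_eq_empty (ae_eq_empty.mpr (Measure.addHaar_sphere _ _ _))
  rw [setLIntegral_congr hae, aux_polar (hc.measurable.indicator measurableSet_ball)
    (fun z _ => by positivity) (fun t _ => hc.continuousOn.circleIntegrable')]
  have hd : ∀ t : ℝ, HasDerivAt (fun t : ℝ => Real.pi * Real.log (1 + t ^ 2))
      (2 * Real.pi * t / (1 + t ^ 2)) t := by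
    intro t
    have h1 : HasDerivAt (fun t : ℝ => 1 + t ^ 2) (2 * t) t := by
      simpa using ((hasDerivAt_pow 2 t).const_add 1)
    have := (h1.log (by positivity)).const_mul Real.pi
    exact this.congr_deriv (by ring)
  have hc2 : Continuous fun t : ℝ => 2 * Real.pi * t / (1 + t ^ 2) := by
    apply Continuous.div (by fun_prop) (by fun_prop)
    intro z; positivity
  have hi : ∫ t in (0:ℝ)..M, 2 * Real.pi * t / (1 + t ^ 2) = Real.pi * Real.log (1 + M ^ 2) := by
    rw [intervalIntegral.integral_eq_sub_of_hasDerivAt (fun t _ => hd t) (hc2.intervalIntegrable _ _)]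
    simp
  rw [← hi, intervalIntegral.integral_of_le hM, ← restrict_Ioo_eq_restrict_Ioc,
    ofReal_integral_eq_lintegral_ofReal]
  · apply setLIntegral_mono' measurableSet_Ioo
    intro t ht
    apply ENNReal.ofReal_le_ofReal
    have : Real.circleAverage (fun z : ℂ => ‖z‖ ^ 2 / (1 + ‖z‖ ^ 2) ^ 2) 0 t
        = t ^ 2 / (1 + t ^ 2) ^ 2 := by
      apply Real.circleAverage_const_on_circle
      intro x hx
      have : ‖x‖ = t := by simpa [abs_of_pos ht.1] using hx
      rw [this]
    rw [this]
    have ht0 := ht.1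
    have hpi := Real.pi_pos
    rw [mul_div_assoc (2 * Real.pi) t]
    rw [mul_assoc]
    gcongr
    rw [le_div_iff₀ (by positivity)]
    have : t * (t ^ 2 / (1 + t ^ 2) ^ 2) * (1 + t ^ 2) = t * (t ^ 2 / (1 + t ^ 2)) := by
      field_simp
    rw [this]
    have : t ^ 2 / (1 + t ^ 2) ≤ 1 := by
      rw [div_le_one (by positivity)]; linarith
    nlinarith
  · exact (hc2.integrableOn_Icc (a := 0) (b := M)).mono_set Ioo_subset_Icc_self
  · filter_upwards [ae_restrict_mem measurableSet_Ioo] with t ht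
    have := ht.1; have hpi := Real.pi_pos
    simp only [Pi.zero_apply]; positivity

open MeasureTheory in
/-- Energy bound. -/
lemma aux_energy {F : ℂ → ℂ} {Q : Set ℂ} {p : ℕ} {V : ℝ} (hV : 0 ≤ V) (hQ : MeasurableSet Q)
    (hF : ∀ w ∈ Q, HasStrictDerivAt F (deriv F w) w)
    (hp : ∀ c : ℂ, ∀ s : Finset ℂ, (∀ t ∈ s, t ∈ Q ∧ F t = c) → s.card ≤ p)
    (hb : ∀ w ∈ Q, 1 / 2 * Real.log (1 + ‖F w‖ ^ 2) ≤ V) :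
    ∫⁻ w in Q, ENNReal.ofReal ((‖F w‖ * ‖deriv F w‖ / (1 + ‖F w‖ ^ 2)) ^ 2) ≤
      ENNReal.ofReal (2 * Real.pi * p * V) := by
  set M := Real.sqrt (Real.exp (2 * V) - 1) with hM
  have hM2 : M ^ 2 = Real.exp (2 * V) - 1 := by
    rw [hM, Real.sq_sqrt]
    have := Real.add_one_le_exp (2 * V); linarith
  have hmaps : MapsTo F Q (closedBall 0 M) := by
    intro w hw
    have h1 := hb w hw
    have h2 : 1 + ‖F w‖ ^ 2 ≤ Real.exp (2 * V) := by
      rw [← Real.log_le_iff_le_exp (by positivity)]; linarith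
    simp only [mem_closedBall, dist_zero_right]
    rw [hM]
    apply Real.le_sqrt_of_sq_le; linarith
  have hc : Continuous fun z : ℂ => ‖z‖ ^ 2 / (1 + ‖z‖ ^ 2) ^ 2 := by
    apply Continuous.div (by fun_prop) (by fun_prop)
    intro z; positivity
  have h := aux_area hQ hF hp (measurableSet_closedBall (x := (0:ℂ)) (ε := M)) hmaps
    (ψ := fun z => ENNReal.ofReal (‖z‖ ^ 2 / (1 + ‖z‖ ^ 2) ^ 2)) (by fun_prop)
  calc _ = ∫⁻ w in Q, ENNReal.ofReal (‖deriv F w‖ ^ 2) *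
          ENNReal.ofReal (‖F w‖ ^ 2 / (1 + ‖F w‖ ^ 2) ^ 2) := by
        congr 1; ext w
        rw [← ENNReal.ofReal_mul (by positivity)]
        congr 1; rw [div_pow]; ring
    _ ≤ _ := h
    _ ≤ p * ENNReal.ofReal (Real.pi * Real.log (1 + M ^ 2)) := by
        gcongr; exact aux_psi (Real.sqrt_nonneg _)
    _ = _ := by
        rw [hM2, ← ENNReal.ofReal_natCast, ← ENNReal.ofReal_mul (by positivity)]
        congr 1
        rw [show 1 + (Real.exp (2 * V) - 1) = Real.exp (2 * V) by ring, Real.log_exp]; ring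

lemma aux_cs (a b : ℂ) : Real.log ‖1 + starRingEnd ℂ a * b‖ ≤
    1/2 * Real.log (1 + ‖a‖^2) + 1/2 * Real.log (1 + ‖b‖^2) := by
  by_cases h : 1 + starRingEnd ℂ a * b = 0
  · rw [h]; simp only [norm_zero, Real.log_zero]
    have := Real.log_nonneg (show (1:ℝ) ≤ 1 + ‖a‖^2 by nlinarith [sq_nonneg ‖a‖])
    have := Real.log_nonneg (show (1:ℝ) ≤ 1 + ‖b‖^2 by nlinarith [sq_nonneg ‖b‖])
    linarith
  · have h1 : ‖1 + starRingEnd ℂ a * b‖ ≤ 1 + ‖a‖ * ‖b‖ := by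
      refine (norm_add_le _ _).trans ?_
      simp
    have h2 : ‖1 + starRingEnd ℂ a * b‖ ^ 2 ≤ (1 + ‖a‖^2) * (1 + ‖b‖^2) := by
      calc _ ≤ (1 + ‖a‖ * ‖b‖)^2 := by gcongr
        _ ≤ _ := by nlinarith [sq_nonneg (‖a‖ - ‖b‖)]
    have h3 := Real.log_le_log (by have := norm_pos_iff.mpr h; positivity) h2
    rw [Real.log_pow, Real.log_mul (by positivity) (by positivity)] at h3
    push_cast at h3
    linarith

lemma aux_vcont {F : ℂ → ℂ} {S : Set ℂ} (hF : ContinuousOn F S) :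
    ContinuousOn (fun z => 1/2 * Real.log (1 + ‖F z‖^2)) S := by
  apply ContinuousOn.mul continuousOn_const
  apply ContinuousOn.log (by fun_prop)
  intro z _; positivity

lemma aux_vnonneg (w : ℂ) : 0 ≤ 1/2 * Real.log (1 + ‖w‖^2) := by
  have := Real.log_nonneg (show (1:ℝ) ≤ 1 + ‖w‖^2 by nlinarith [sq_nonneg ‖w‖])
  linarith

lemma aux_subcirc {F : ℂ → ℂ} {X : ℂ} {t : ℝ} (ht : 0 < t)
    (hF : AnalyticOnNhd ℂ F (closedBall X t)) :
    1/2 * Real.log (1 + ‖F X‖^2) ≤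
      Real.circleAverage (fun z => 1/2 * Real.log (1 + ‖F z‖^2)) X t := by
  have hG : AnalyticOnNhd ℂ (fun z => 1 + starRingEnd ℂ (F X) * F z) (closedBall X t) :=
    analyticOnNhd_const.add (analyticOnNhd_const.mul hF)
  have e : 1 + starRingEnd ℂ (F X) * F X = ((1 + ‖F X‖^2 : ℝ) : ℂ) := by
    rw [Complex.conj_mul']; push_cast; ring
  have hpos : (0:ℝ) < 1 + ‖F X‖^2 := by positivity
  have e2 : ‖1 + starRingEnd ℂ (F X) * F X‖ = 1 + ‖F X‖^2 := by
    rw [e, Complex.norm_real, Real.norm_of_nonneg hpos.le]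
  have h1 := aux_jensen_sub ht hG (by
    rw [← norm_pos_iff, e2]; exact hpos)
  rw [e2] at h1
  have hsub : sphere X |t| ⊆ closedBall X t := by
    rw [abs_of_pos ht]; exact sphere_subset_closedBall
  have hv : CircleIntegrable (fun z => 1/2 * Real.log (1 + ‖F z‖^2)) X t :=
    ContinuousOn.circleIntegrable' ((aux_vcont hF.continuousOn).mono hsub)
  have hc : CircleIntegrable (fun z : ℂ => 1/2 * Real.log (1 + ‖F X‖^2)) X t :=
    (continuousOn_const).circleIntegrable'
  have hl : CircleIntegrable (fun z => Real.log ‖1 + starRingEnd ℂ (F X) * F z‖) X t := by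
    apply MeromorphicOn.circleIntegrable_log_norm
    exact (hG.mono hsub).meromorphicOn
  have h2 := Real.circleAverage_mono hl (hc.add hv) (fun z _ => aux_cs (F X) (F z))
  rw [Real.circleAverage_add hc hv, Real.circleAverage_const] at h2
  linarith

open MeasureTheory in
lemma aux_submean {F : ℂ → ℂ} {X : ℂ} {s : ℝ} (hs : 0 < s)
    (hF : AnalyticOnNhd ℂ F (closedBall X s)) :
    Real.pi * s^2 * (1/2 * Real.log (1 + ‖F X‖^2)) ≤
      ∫ z in ball X s, 1/2 * Real.log (1 + ‖F z‖^2) := by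
  set v : ℂ → ℝ := fun z => 1/2 * Real.log (1 + ‖F z‖^2) with hv
  have hvc : ContinuousOn v (closedBall X s) := aux_vcont hF.continuousOn
  have hpol := aux_polar (u := v) (c := X) (R := s) (by
      classical
      have := ContinuousOn.measurable_piecewise (hvc.mono ball_subset_closedBall)
        (continuousOn_const (c := (0:ℝ))) measurableSet_ball
      rwa [← piecewise_eq_indicator])
    (fun z _ => aux_vnonneg _)
    (fun t ht => ContinuousOn.circleIntegrable' (hvc.mono (by
      rw [abs_of_pos ht.1]
      exact sphere_subset_closedBall.trans (closedBall_subset_closedBall ht.2.le))))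
  have hinteg : IntegrableOn v (ball X s) :=
    (hvc.integrableOn_compact (isCompact_closedBall _ _)).mono_set ball_subset_closedBall
  have hge : ENNReal.ofReal (Real.pi * s^2 * v X) ≤ ∫⁻ z in ball X s, ENNReal.ofReal (v z) := by
    rw [hpol]
    have hi : ∫ t in (0:ℝ)..s, 2 * Real.pi * t * v X = Real.pi * s^2 * v X := by
      rw [intervalIntegral.integral_mul_const]
      have := intervalIntegral.integral_const_mul (μ := volume) (a := 0) (b := s) (2 * Real.pi) (fun x : ℝ => x)
      rw [this, integral_id]
      ring
    rw [← hi, intervalIntegral.integral_of_le hs.le, ← restrict_Ioo_eq_restrict_Ioc,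
      ofReal_integral_eq_lintegral_ofReal]
    · apply setLIntegral_mono' measurableSet_Ioo
      intro t ht
      apply ENNReal.ofReal_le_ofReal
      have := aux_subcirc ht.1 (hF.mono (closedBall_subset_closedBall ht.2.le))
      have h0 := ht.1
      have := Real.pi_pos
      gcongr
    · exact (Continuous.integrableOn_Icc (by fun_prop)).mono_set Ioo_subset_Icc_self
    · filter_upwards [ae_restrict_mem measurableSet_Ioo] with t ht
      have h0 := ht.1
      have := Real.pi_pos
      have := aux_vnonneg (F X)
      simp only [hv, Pi.zero_apply]; positivity
  rw [← ofReal_integral_eq_lintegral_ofReal hinteg (Filter.Eventually.of_forall fun z => aux_vnonneg _)] at hge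
  exact (ENNReal.ofReal_le_ofReal_iff (integral_nonneg fun z => aux_vnonneg _)).mp hge

lemma aux_cs1 {k : ℝ → ℝ} (hk : Continuous k) {a b : ℝ} (hab : a ≤ b) :
    (∫ x in a..b, k x)^2 ≤ (b - a) * ∫ x in a..b, k x^2 := by
  rcases hab.eq_or_lt with h | h
  · subst h; simp
  set m := (∫ x in a..b, k x) / (b - a) with hm
  have h1 : 0 ≤ ∫ x in a..b, (k x - m)^2 :=
    intervalIntegral.integral_nonneg hab (fun x _ => sq_nonneg _)
  have h2 : ∫ x in a..b, (k x - m)^2 = (∫ x in a..b, k x^2) - 2*m*(∫ x in a..b, k x) + m^2*(b-a) := by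
    have : (fun x => (k x - m)^2) = fun x => (k x^2 - 2*m*k x) + m^2 := by
      ext x; ring
    rw [this, intervalIntegral.integral_add, intervalIntegral.integral_sub,
      intervalIntegral.integral_const_mul, intervalIntegral.integral_const]
    · simp; ring
    all_goals exact Continuous.intervalIntegrable (by fun_prop) _ _
  have hba : 0 < b - a := by linarith
  have h3 : (∫ x in a..b, k x) = m * (b - a) := by rw [hm]; field_simp
  rw [h2, h3] at h1
  rw [h3]
  nlinarith

lemma aux_exists_le {k : ℝ → ℝ} (hk : Continuous k) {a b : ℝ} (hab : a < b) :
    ∃ x ∈ Icc a b, k x ≤ (∫ x in a..b, k x) / (b - a) := by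
  by_contra! hcon
  set c := (∫ x in a..b, k x) / (b - a) with hc
  have := intervalIntegral.intervalIntegral_pos_of_pos_on (f := fun x => k x - c) (a := a) (b := b)
    (Continuous.intervalIntegrable (by fun_prop) _ _)
    (fun x hx => by have := hcon x (Ioo_subset_Icc_self hx); linarith) hab
  rw [intervalIntegral.integral_sub (hk.intervalIntegrable _ _) (by simp),
    intervalIntegral.integral_const] at this
  have hba : 0 < b - a := by linarith
  have h3 : (∫ x in a..b, k x) = c * (b - a) := by rw [hc]; field_simp
  rw [h3] at this
  simp at this
  linarith [mul_comm c (b-a)]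

open MeasureTheory in
lemma aux_fub {k : ℝ → ℝ → ℝ} (hk : Continuous k.uncurry) {a b c d : ℝ} (hab : a ≤ b) (hcd : c ≤ d) :
    ∫ z in Icc a b ×ℂ Icc c d, k z.re z.im = ∫ x in a..b, ∫ y in c..d, k x y := by
  have e : (Icc a b ×ℂ Icc c d) = Complex.measurableEquivRealProd ⁻¹' (Icc a b ×ˢ Icc c d) := by
    ext z; simp [Complex.mem_reProdIm]; tauto
  rw [e]
  have := Complex.volume_preserving_equiv_real_prod.setIntegral_preimage_emb
    Complex.measurableEquivRealProd.measurableEmbedding (fun q : ℝ × ℝ => k q.1 q.2) (Icc a b ×ˢ Icc c d)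
  simp only [Complex.measurableEquivRealProd_apply] at this
  rw [this, Measure.volume_eq_prod, setIntegral_prod]
  · rw [intervalIntegral.integral_of_le hab, integral_Icc_eq_integral_Ioc]
    simp_rw [intervalIntegral.integral_of_le hcd, integral_Icc_eq_integral_Ioc]
  · exact hk.continuousOn.integrableOn_compact (isCompact_Icc.prod isCompact_Icc)

open MeasureTheory in
lemma aux_rect_real {v g : ℝ → ℝ → ℝ} {X s h B : ℝ} (hX : 0 ≤ X) (hs : 0 < s) (hh : 0 < h)
    (hg : Continuous g.uncurry)
    (hv1 : ∀ x ∈ Icc (-s) (X+s), ∀ y ∈ Icc (-h) h, ∀ t ∈ Icc (-h) h,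
      v x y ≤ v x t + ∫ τ in (-h)..h, g x τ)
    (hv2 : ∀ y ∈ Icc (-h) h, ∀ x ∈ Icc (-s) (X+s), ∀ t ∈ Icc (-s) (X+s),
      v x y ≤ v t y + ∫ ξ in (-s)..(X+s), g ξ y)
    (hB : ∀ x ∈ Icc (-s) s, v x 0 ≤ B) :
    ∀ x ∈ Icc (X-s) (X+s), ∀ y ∈ Icc (-h) h,
      v x y ≤ B + √((X+2*s) * (∫ x in (-s)..(X+s), ∫ y in (-h)..h, g x y^2) / (2*h)) +
        √(h * (∫ x in (-s)..(X+s), ∫ y in (-h)..h, g x y^2) / s) + ∫ τ in (-h)..h, g x τ := by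
  set D := ∫ x in (-s)..(X+s), ∫ y in (-h)..h, g x y^2 with hD
  have hg2 : Continuous (fun x y => g x y ^ 2).uncurry := by
    have := hg.pow 2
    exact this
  have hgx : ∀ x, Continuous (g x) := fun x => hg.comp (by fun_prop : Continuous fun y => (x, y))
  have hgy : ∀ y, Continuous (fun x => g x y) := fun y => hg.comp (by fun_prop : Continuous fun x => (x, y))
  have hE1 : Continuous fun x => ∫ y in (-h)..h, g x y^2 :=
    intervalIntegral.continuous_parametric_intervalIntegral_of_continuous' hg2 _ _
  have hE2 : Continuous fun y => ∫ x in (-s)..(X+s), g x y^2 := by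
    refine intervalIntegral.continuous_parametric_intervalIntegral_of_continuous' (f := fun y x => g x y^2) ?_ _ _
    exact hg2.comp continuous_swap
  have hsw : D = ∫ y in (-h)..h, ∫ x in (-s)..(X+s), g x y^2 := by
    apply intervalIntegral_intervalIntegral_swap
    exact (hg2.continuousOn.integrableOn_compact (isCompact_uIcc.prod isCompact_uIcc)).mono_set
      (prod_mono uIoc_subset_uIcc uIoc_subset_uIcc)
  obtain ⟨t, ht, ht2⟩ := aux_exists_le hE2 (show -h < h by linarith)
  rw [← hsw] at ht2
  obtain ⟨x', hx', hx2⟩ := aux_exists_le hE1 (show -s < s by linarith)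
  have hle : ∫ x in (-s)..s, ∫ y in (-h)..h, g x y^2 ≤ D := by
    rw [hD]
    apply intervalIntegral.integral_mono_interval le_rfl (by linarith) (by linarith)
    · exact Filter.Eventually.of_forall fun x =>
        intervalIntegral.integral_nonneg (by linarith) (fun y _ => sq_nonneg _)
    · exact hE1.intervalIntegrable _ _
  have hx3 : ∫ y in (-h)..h, g x' y^2 ≤ D / (2*s) := by
    refine hx2.trans ?_
    rw [show s - -s = 2*s by ring]
    gcongr
  have hG2 : ∫ ξ in (-s)..(X+s), g ξ t ≤ √((X+2*s) * D / (2*h)) := by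
    apply Real.le_sqrt_of_sq_le
    refine (aux_cs1 (hgy t) (by linarith)).trans ?_
    rw [show X + s - -s = X + 2*s by ring, mul_div_assoc]
    rw [show h - -h = 2*h by ring] at ht2
    gcongr
  have hG1 : ∫ y in (-h)..h, g x' y ≤ √(h * D / s) := by
    apply Real.le_sqrt_of_sq_le
    refine (aux_cs1 (hgx x') (by linarith)).trans ?_
    rw [show h - -h = 2*h by ring]
    calc 2 * h * ∫ y in (-h)..h, g x' y^2 ≤ 2*h*(D/(2*s)) := by gcongr
      _ = _ := by field_simp
  intro x hx y hy
  have hxm : x ∈ Icc (-s) (X+s) := ⟨by linarith [hx.1], hx.2⟩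
  have hxm' : x' ∈ Icc (-s) (X+s) := ⟨hx'.1, by linarith [hx'.2]⟩
  have h1 := hv1 x hxm y hy t ht
  have h2 := hv2 t ht x hxm x' hxm'
  have h3 := hv1 x' hxm' t ht 0 ⟨by linarith, by linarith⟩
  have h4 := hB x' hx'
  linarith

lemma aux_ftc {u φ : ℝ → ℝ} {a b : ℝ} (hφ : Continuous φ) (h0 : ∀ x, 0 ≤ φ x)
    (hd : ∀ x ∈ Icc a b, ∃ d, HasDerivAt u d x ∧ |d| ≤ φ x) :
    ∀ y ∈ Icc a b, ∀ t ∈ Icc a b, u y ≤ u t + ∫ x in a..b, φ x := by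
  choose! d hd1 hd2 using hd
  have key : ∀ y ∈ Icc a b, ∀ t ∈ Icc a b, y ≤ t → |u t - u y| ≤ ∫ x in a..b, φ x := by
    intro y hy t ht hyt
    have hsub : Icc y t ⊆ Icc a b := Icc_subset_Icc hy.1 ht.2
    have hm : ∫ x in y..t, φ x ≤ ∫ x in a..b, φ x := by
      apply intervalIntegral.integral_mono_interval hy.1 hyt ht.2
      · exact Filter.Eventually.of_forall h0
      · exact hφ.intervalIntegrable _ _
    have h1 := intervalIntegral.sub_le_integral_of_hasDeriv_right_of_le (g := u) (g' := d) (φ := φ) hyt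
      (fun x hx => (hd1 x (hsub hx)).continuousAt.continuousWithinAt)
      (fun x hx => (hd1 x (hsub (Ioo_subset_Icc_self hx))).hasDerivWithinAt)
      hφ.integrableOn_Icc
      (fun x hx => (le_abs_self _).trans (hd2 x (hsub (Ioo_subset_Icc_self hx))))
    have h2 := intervalIntegral.sub_le_integral_of_hasDeriv_right_of_le (g := -u) (g' := -d) (φ := φ) hyt
      (fun x hx => (hd1 x (hsub hx)).neg.continuousAt.continuousWithinAt)
      (fun x hx => (hd1 x (hsub (Ioo_subset_Icc_self hx))).neg.hasDerivWithinAt)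
      hφ.integrableOn_Icc
      (fun x hx => (neg_le_abs _).trans (hd2 x (hsub (Ioo_subset_Icc_self hx))))
    simp only [Pi.neg_apply] at h2
    rw [abs_le]; constructor <;> linarith
  intro y hy t ht
  rcases le_total y t with h | h
  · have := abs_le.mp (key y hy t ht h); linarith [this.1, this.2]
  · have := abs_le.mp (key t ht y hy h); linarith [this.1, this.2]

lemma aux_vderiv {F : ℂ → ℂ} {P q : ℂ} {t : ℝ} (hq : ‖q‖ = 1)
    (hF : DifferentiableAt ℂ F (P + t * q)) :
    ∃ d, HasDerivAt (fun t : ℝ => 1/2 * Real.log (1 + ‖F (P + t * q)‖^2)) d t ∧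
      |d| ≤ ‖F (P + t * q)‖ * ‖deriv F (P + t * q)‖ / (1 + ‖F (P + t * q)‖^2) := by
  have h1 : HasDerivAt (fun z : ℂ => P + z * q) q (t : ℂ) := by
    simpa using ((hasDerivAt_id (t : ℂ)).mul_const q).const_add P
  have h2 : HasDerivAt (fun z : ℂ => F (P + z * q)) (deriv F (P + t * q) * q) (t : ℂ) :=
    HasDerivAt.comp (h₂ := F) (t : ℂ) hF.hasDerivAt h1
  have h3 := (h2.comp_ofReal).norm_sq
  have h4 := ((h3.const_add 1).log (by positivity)).const_mul (1/2 : ℝ)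
  refine ⟨_, h4, ?_⟩
  have hp : (0:ℝ) < 1 + ‖F (P + t * q)‖^2 := by positivity
  have h5 := abs_real_inner_le_norm (F (P + t * q)) (deriv F (P + t * q) * q)
  rw [norm_mul, hq, mul_one] at h5
  rw [show ∀ a b : ℝ, 1/2 * (2 * a / b) = a / b by intros; ring, abs_div, abs_of_pos hp]
  gcongr

set_option maxHeartbeats 1600000 in
open MeasureTheory in
lemma aux_rect {F : ℂ → ℂ} {X h B D : ℝ} (hX : 0 ≤ X) (h1 : 1 ≤ h) (h2 : h ≤ 2)
    (hF : AnalyticOnNhd ℂ F (Icc (-(1/32)) (X+1/32) ×ℂ Icc (-h) h))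
    (hB : ∀ x : ℝ, x ∈ Icc (-(1/32)) (1/32:ℝ) → 1/2 * Real.log (1 + ‖F x‖^2) ≤ B)
    (hD0 : 0 ≤ D)
    (hD : ∫⁻ w in Icc (-(1/32)) (X+1/32) ×ℂ Icc (-h) h,
      ENNReal.ofReal ((‖F w‖ * ‖deriv F w‖ / (1 + ‖F w‖^2))^2) ≤ ENNReal.ofReal D) :
    1/2 * Real.log (1 + ‖F X‖^2) ≤ B + √((X+2*(1/32))*D/(2*h)) + 19 * √D := by
  set s : ℝ := 1/32 with hs
  have hs0 : 0 < s := by norm_num [hs]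
  set Q := Icc (-s) (X+s) ×ℂ Icc (-h) h with hQ
  set k : ℂ → ℝ := fun w => ‖F w‖ * ‖deriv F w‖ / (1 + ‖F w‖^2) with hk
  have hab : -s ≤ X + s := by linarith
  have hcd : -h ≤ h := by linarith
  have hkc : ContinuousOn k Q := by
    have e1 := hF.continuousOn
    have e2 := hF.deriv.continuousOn
    apply ContinuousOn.div (by fun_prop) (by fun_prop)
    intro z _; positivity
  set ι : ℝ → ℝ → ℂ := fun x y => ((projIcc (-s) (X+s) hab x : ℝ) : ℂ) + ((projIcc (-h) h hcd y : ℝ) : ℂ) * Complex.I with hι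
  have hιQ : ∀ x y, ι x y ∈ Q := by
    intro x y
    rw [hQ, Complex.mem_reProdIm]
    simp only [hι, Complex.add_re, Complex.ofReal_re, Complex.mul_re, Complex.I_re, Complex.ofReal_im,
      Complex.I_im, Complex.add_im, Complex.mul_im, mul_zero, zero_mul, mul_one, sub_zero, add_zero, zero_add]
    exact ⟨(projIcc _ _ hab x).2, (projIcc _ _ hcd y).2⟩
  have hιc : Continuous ι.uncurry := by
    have : ι.uncurry = fun q : ℝ × ℝ => ((projIcc (-s) (X+s) hab q.1 : ℝ) : ℂ) + ((projIcc (-h) h hcd q.2 : ℝ) : ℂ) * Complex.I := rfl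
    rw [this]
    fun_prop
  have hιe : ∀ x ∈ Icc (-s) (X+s), ∀ y ∈ Icc (-h) h, ι x y = x + y * Complex.I := by
    intro x hx y hy
    simp only [hι]
    rw [projIcc_of_mem hab hx, projIcc_of_mem hcd hy]
  set g : ℝ → ℝ → ℝ := fun x y => k (ι x y) with hg
  have hgc : Continuous g.uncurry := by
    have : g.uncurry = k ∘ ι.uncurry := rfl
    rw [this]
    exact hkc.comp_continuous hιc (fun q => hιQ _ _)
  have hg0 : ∀ x y, 0 ≤ g x y := by intro x y; simp only [hg, hk]; positivity
  set v : ℝ → ℝ → ℝ := fun x y => 1/2 * Real.log (1 + ‖F (x + y * Complex.I)‖^2) with hv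
  have hQm : ∀ x ∈ Icc (-s) (X+s), ∀ y ∈ Icc (-h) h, (x + y * Complex.I : ℂ) ∈ Q := by
    intro x hx y hy; rw [← hιe x hx y hy]; exact hιQ _ _
  have hgx : ∀ x, Continuous (g x) := fun x => hgc.comp (by fun_prop : Continuous fun y => (x, y))
  have hgy : ∀ y, Continuous (fun x => g x y) := fun y => hgc.comp (by fun_prop : Continuous fun x => (x, y))
  have hv1 : ∀ x ∈ Icc (-s) (X+s), ∀ y ∈ Icc (-h) h, ∀ t ∈ Icc (-h) h,
      v x y ≤ v x t + ∫ τ in (-h)..h, g x τ := by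
    intro x hx
    apply aux_ftc (hgx x) (hg0 x)
    intro y hy
    have := aux_vderiv (F := F) (P := x) (q := Complex.I) (t := y) (by simp) (hF _ (hQm x hx y hy)).differentiableAt
    rwa [← hιe x hx y hy] at this
  have hv2 : ∀ y ∈ Icc (-h) h, ∀ x ∈ Icc (-s) (X+s), ∀ t ∈ Icc (-s) (X+s),
      v x y ≤ v t y + ∫ ξ in (-s)..(X+s), g ξ y := by
    intro y hy
    apply aux_ftc (u := fun x => v x y) (hgy y) (fun x => hg0 x y)
    intro x hx
    have := aux_vderiv (F := F) (P := y * Complex.I) (q := 1) (t := x) (by simp)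
      (by rw [mul_one, add_comm]; exact (hF _ (hQm x hx y hy)).differentiableAt)
    simp only [mul_one, add_comm (y * Complex.I)] at this
    rw [← hιe x hx y hy] at this
    exact this
  have hB' : ∀ x ∈ Icc (-s) s, v x 0 ≤ B := by
    intro x hx; simpa [hv] using hB x hx
  have hmain := aux_rect_real hX hs0 (by linarith) hgc hv1 hv2 hB'
  set D' := ∫ x in (-s)..(X+s), ∫ y in (-h)..h, g x y^2 with hD'
  have hg2 : Continuous (fun x y => g x y ^ 2).uncurry := by
    have := hgc.pow 2
    exact this
  have hQmeas : MeasurableSet Q := by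
    apply IsCompact.measurableSet
    exact isCompact_Icc.reProdIm isCompact_Icc
  have hDD : D' ≤ D := by
    rw [hD', ← aux_fub hg2 hab hcd]
    have e : ∫ z in Icc (-s) (X+s) ×ℂ Icc (-h) h, g z.re z.im ^2 = ∫ z in Q, k z ^ 2 := by
      apply setIntegral_congr_fun hQmeas
      intro z hz
      have hz' := Complex.mem_reProdIm.mp hz
      simp only [hg]
      rw [hιe _ hz'.1 _ hz'.2, Complex.re_add_im]
    rw [e, integral_eq_lintegral_of_nonneg_ae (Filter.Eventually.of_forall fun z => sq_nonneg _)
      ((hkc.pow 2).aestronglyMeasurable hQmeas)]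
    exact ENNReal.toReal_le_of_le_ofReal hD0 hD
  have hD'0 : 0 ≤ D' := by
    apply intervalIntegral.integral_nonneg hab
    intro x _
    exact intervalIntegral.integral_nonneg hcd (fun y _ => sq_nonneg _)
  -- the disc average
  have hballQ : closedBall (X:ℂ) s ⊆ Icc (X-s) (X+s) ×ℂ Icc (-s) s := by
    intro z hz
    rw [mem_closedBall, dist_eq_norm] at hz
    have r1 := (Complex.abs_re_le_norm (z - X)).trans hz
    have r2 := (Complex.abs_im_le_norm (z - X)).trans hz
    simp only [Complex.sub_re, Complex.sub_im, Complex.ofReal_re, Complex.ofReal_im, sub_zero] at r1 r2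
    rw [abs_le] at r1 r2
    rw [Complex.mem_reProdIm]
    exact ⟨⟨by linarith, by linarith⟩, ⟨by linarith, by linarith⟩⟩
  have hballQ2 : Icc (X-s) (X+s) ×ℂ Icc (-s) s ⊆ Q := by
    intro z hz
    rw [Complex.mem_reProdIm] at hz
    rw [hQ, Complex.mem_reProdIm]
    have : s ≤ h := by rw [hs]; linarith
    exact ⟨⟨by linarith [hz.1.1], hz.1.2⟩, ⟨by linarith [hz.2.1], by linarith [hz.2.2]⟩⟩
  have hsm := aux_submean (X := (X:ℂ)) hs0 (hF.mono (hballQ.trans hballQ2))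
  set C := B + √((X+2*s) * D' / (2*h)) + √(h * D' / s) with hC
  set G : ℝ → ℝ := fun x => ∫ τ in (-h)..h, g x τ with hG
  have hGc : Continuous G := intervalIntegral.continuous_parametric_intervalIntegral_of_continuous' hgc _ _
  have hG0 : ∀ x, 0 ≤ G x := fun x => intervalIntegral.integral_nonneg hcd (fun y _ => hg0 x y)
  have hGre : Continuous fun z : ℂ => G z.re := hGc.comp Complex.continuous_re
  have hGint : IntegrableOn (fun z : ℂ => G z.re) (Icc (X-s) (X+s) ×ℂ Icc (-s) s) :=
    hGre.continuousOn.integrableOn_compact (isCompact_Icc.reProdIm isCompact_Icc)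
  have hbsub : ball (X:ℂ) s ⊆ Icc (X-s) (X+s) ×ℂ Icc (-s) s := ball_subset_closedBall.trans hballQ
  have hfin : volume (ball (X:ℂ) s) ≠ ⊤ := measure_ball_lt_top.ne
  have hup : ∫ z in ball (X:ℂ) s, 1/2 * Real.log (1 + ‖F z‖^2) ≤ Real.pi * s^2 * C + 2*s*∫ x in (X-s)..(X+s), G x := by
    calc _ ≤ ∫ z in ball (X:ℂ) s, (C + G z.re) := by
          apply setIntegral_mono_on
          · refine ContinuousOn.integrableOn_compact (isCompact_closedBall (X:ℂ) s) ?_ |>.mono_set ball_subset_closedBall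
            exact aux_vcont (hF.continuousOn.mono (hballQ.trans hballQ2))
          · exact (integrableOn_const hfin).add (hGint.mono_set hbsub)
          · exact measurableSet_ball
          · intro z hz
            have hz1 := Complex.mem_reProdIm.mp (hbsub hz)
            have hz2 := Complex.mem_reProdIm.mp (hballQ2 (hbsub hz))
            have := hmain z.re hz1.1 z.im hz2.2
            simpa only [hv, Complex.re_add_im] using this
      _ = Real.pi * s^2 * C + ∫ z in ball (X:ℂ) s, G z.re := by
          have hci : Integrable (fun _ : ℂ => C) (volume.restrict (ball (X:ℂ) s)) := integrableOn_const hfin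
          rw [integral_add hci (hGint.mono_set hbsub), setIntegral_const]
          congr 1
          rw [measureReal_def, Complex.volume_ball]
          simp [hs0.le]
          left; ring
      _ ≤ Real.pi * s^2 * C + ∫ z in Icc (X-s) (X+s) ×ℂ Icc (-s) s, G z.re := by
          gcongr
          exact Filter.Eventually.of_forall fun z => hG0 _
      _ = _ := by
          rw [aux_fub (k := fun x _ => G x) (by exact hGc.comp continuous_fst) (by linarith) (by linarith)]
          simp only [intervalIntegral.integral_const, smul_eq_mul, intervalIntegral.integral_const_mul]
          ring
  have hGb : ∫ x in (X-s)..(X+s), G x ≤ √D / 2 := by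
    apply le_trans (b := √(D/4))
    · apply Real.le_sqrt_of_sq_le
      refine (aux_cs1 hGc (by linarith)).trans ?_
      have hE1 : Continuous fun x => ∫ y in (-h)..h, g x y^2 :=
        intervalIntegral.continuous_parametric_intervalIntegral_of_continuous' hg2 _ _
      have t1 : ∫ x in (X-s)..(X+s), G x ^2 ≤ ∫ x in (X-s)..(X+s), 2*h*∫ y in (-h)..h, g x y^2 := by
        apply intervalIntegral.integral_mono_on (by linarith)
        · exact Continuous.intervalIntegrable (by fun_prop) _ _
        · exact Continuous.intervalIntegrable (by fun_prop) _ _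
        · intro x _
          refine (aux_cs1 (hgx x) hcd).trans (le_of_eq ?_)
          ring
      have t2 : ∫ x in (X-s)..(X+s), ∫ y in (-h)..h, g x y^2 ≤ D' := by
        apply intervalIntegral.integral_mono_interval (by linarith) (by linarith) le_rfl
        · exact Filter.Eventually.of_forall fun x =>
            intervalIntegral.integral_nonneg (by linarith) (fun y _ => sq_nonneg _)
        · exact hE1.intervalIntegrable _ _
      rw [intervalIntegral.integral_const_mul] at t1
      calc (X + s - (X - s)) * ∫ x in (X-s)..(X+s), G x ^2 ≤ (2*s) * (2*h*D) := by
            rw [show X + s - (X - s) = 2*s by ring]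
            have : 2*h*(∫ x in (X-s)..(X+s), ∫ y in (-h)..h, g x y^2) ≤ 2*h*D := by
              gcongr; exact t2.trans hDD
            gcongr; exact t1.trans this
        _ ≤ D/4 := by rw [hs]; nlinarith
    · rw [Real.sqrt_div hD0, show (4:ℝ) = 2^2 by norm_num, Real.sqrt_sq (by norm_num)]
  have hs1 : √((X+2*s) * D' / (2*h)) ≤ √((X+2*s)*D/(2*h)) := by
    apply Real.sqrt_le_sqrt
    gcongr
  have hs2 : √(h * D' / s) ≤ 8 * √D := by
    rw [show (8:ℝ) * √D = √(64 * D) by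
      rw [Real.sqrt_mul (by norm_num), show (64:ℝ) = 8^2 by norm_num, Real.sqrt_sq (by norm_num)]]
    apply Real.sqrt_le_sqrt
    rw [hs, div_le_iff₀ (by norm_num)]
    nlinarith
  have hfinal := hsm.trans hup
  have hpi := Real.pi_gt_three
  have hsq := Real.sqrt_nonneg D
  have hps : 0 < Real.pi * s^2 := by positivity
  have : 2*s*∫ x in (X-s)..(X+s), G x ≤ Real.pi * s^2 * (11 * √D) := by
    calc _ ≤ 2*s*(√D/2) := by gcongr
      _ = s * √D := by ring
      _ ≤ _ := by rw [hs]; nlinarith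
  have h9 : 1/2 * Real.log (1 + ‖F X‖^2) ≤ C + 11 * √D := by
    refine le_of_mul_le_mul_left ?_ hps
    rw [mul_add]
    refine hfinal.trans ?_
    gcongr
  rw [hC] at h9
  linarith

noncomputable def auxPhi (w : ℂ) : ℂ := (Complex.exp w - 1) / (Complex.exp w + 1)

lemma auxPhi_re_pos {w : ℂ} (h : |w.im| < Real.pi / 2) : 0 < (Complex.exp w).re := by
  rw [Complex.exp_re]
  exact mul_pos (Real.exp_pos _) (Real.cos_pos_of_mem_Ioo (abs_lt.mp h))

lemma auxPhi_ne {w : ℂ} (h : |w.im| < Real.pi / 2) : Complex.exp w + 1 ≠ 0 := by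
  intro h0
  have h1 := auxPhi_re_pos h
  have h2 := congrArg Complex.re h0
  simp only [Complex.add_re, Complex.one_re, Complex.zero_re] at h2
  linarith

lemma auxPhi_inj {w z : ℂ} (hw : |w.im| < Real.pi / 2) (hz : |z.im| < Real.pi / 2)
    (h : auxPhi w = auxPhi z) : w = z := by
  unfold auxPhi at h
  rw [div_eq_div_iff (auxPhi_ne hw) (auxPhi_ne hz)] at h
  have hpi := Real.pi_pos
  apply Complex.exp_inj_of_neg_pi_lt_of_le_pi
  · linarith [(abs_lt.mp hw).1]
  · linarith [(abs_lt.mp hw).2]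
  · linarith [(abs_lt.mp hz).1]
  · linarith [(abs_lt.mp hz).2]
  · linear_combination h / 2

lemma auxPhi_analytic {w : ℂ} (h : |w.im| < Real.pi / 2) : AnalyticAt ℂ auxPhi w := by
  exact AnalyticAt.div (f := fun w => Complex.exp w - 1) (g := fun w => Complex.exp w + 1)
    (by fun_prop) (by fun_prop) (auxPhi_ne h)

lemma auxPhi_norm {w : ℂ} {h : ℝ} (hh : h < Real.pi / 2) (hw : |w.im| ≤ h) :
    Real.cos h / 2 * Real.exp (-|w.re|) ≤ 1 - ‖auxPhi w‖ := by
  have hlt : |w.im| < Real.pi / 2 := by linarith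
  have hne := auxPhi_ne hlt
  have hpos : 0 < ‖Complex.exp w + 1‖ := norm_pos_iff.mpr hne
  have hcos : Real.cos h ≤ Real.cos w.im := by
    rw [← Real.cos_abs w.im]
    apply Real.cos_le_cos_of_nonneg_of_le_pi (abs_nonneg _) _ hw
    linarith [Real.pi_pos]
  have hcos0 : 0 < Real.cos h := Real.cos_pos_of_mem_Ioo ⟨by linarith [abs_nonneg w.im], hh⟩
  set a := Real.exp w.re with ha
  have ha0 : 0 < a := Real.exp_pos _
  have e1 : ‖Complex.exp w + 1‖^2 - ‖Complex.exp w - 1‖^2 = 4 * (a * Real.cos w.im) := by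
    rw [← Complex.exp_re, ← Complex.normSq_eq_norm_sq, ← Complex.normSq_eq_norm_sq]
    simp only [Complex.normSq_apply, Complex.add_re, Complex.sub_re, Complex.add_im, Complex.sub_im,
      Complex.one_re, Complex.one_im]
    ring
  have e2 : ‖Complex.exp w + 1‖ ≤ a + 1 := by
    refine (norm_add_le _ _).trans ?_
    rw [Complex.norm_exp]; simp [ha]
  have e3 : Real.exp (-|w.re|) * (a + 1)^2 ≤ 4 * a := by
    rcases le_total 0 w.re with h0 | h0
    · rw [abs_of_nonneg h0, Real.exp_neg, ← ha]
      have : 1 ≤ a := Real.one_le_exp h0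
      rw [inv_mul_le_iff₀ ha0]
      nlinarith
    · rw [abs_of_nonpos h0, neg_neg, ← ha]
      have : a ≤ 1 := Real.exp_le_one_iff.mpr h0
      have h4 : (a+1)^2 ≤ 4 := by nlinarith
      nlinarith
  have e4 : ‖auxPhi w‖ = ‖Complex.exp w - 1‖ / ‖Complex.exp w + 1‖ := by
    unfold auxPhi; rw [norm_div]
  have e5 : Real.cos h * Real.exp (-|w.re|) ≤ 1 - ‖auxPhi w‖^2 := by
    rw [e4, div_pow, one_sub_div (by positivity), le_div_iff₀ (by positivity), e1]
    calc Real.cos h * Real.exp (-|w.re|) * ‖Complex.exp w + 1‖^2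
        ≤ Real.cos h * Real.exp (-|w.re|) * (a+1)^2 := by gcongr
      _ = Real.cos h * (Real.exp (-|w.re|) * (a+1)^2) := by ring
      _ ≤ Real.cos h * (4 * a) := by gcongr
      _ ≤ Real.cos w.im * (4*a) := by gcongr
      _ = _ := by ring
  have e6 : 0 < 1 - ‖auxPhi w‖^2 := lt_of_lt_of_le (by positivity) e5
  have e7 : ‖auxPhi w‖ < 1 := by nlinarith [norm_nonneg (auxPhi w)]
  nlinarith [norm_nonneg (auxPhi w)]

lemma auxPhi_lt {w : ℂ} (hw : |w.im| < Real.pi / 2) : ‖auxPhi w‖ < 1 := by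
  have := auxPhi_norm hw le_rfl
  have h2 : 0 < Real.cos |w.im| := by
    rw [Real.cos_abs]; exact Real.cos_pos_of_mem_Ioo (abs_lt.mp hw)
  have : 0 < Real.cos |w.im| / 2 * Real.exp (-|w.re|) := by positivity
  linarith

lemma auxPhi_small {x : ℝ} (hx : |x| ≤ 1/32) : ‖auxPhi x‖ < 1/16 := by
  have e : auxPhi x = ((Real.exp x - 1) / (Real.exp x + 1) : ℝ) := by
    unfold auxPhi; push_cast; rfl
  rw [e, Complex.norm_real, Real.norm_eq_abs, abs_div, abs_of_pos (by positivity : (0:ℝ) < Real.exp x + 1),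
    div_lt_iff₀ (by positivity)]
  have := Real.abs_exp_sub_one_le (x := x) (by linarith)
  have := Real.exp_pos x
  linarith

lemma auxPhi_log {r : ℝ} (h0 : 0 ≤ r) (h1 : r < 1) :
    auxPhi (Real.log ((1+r)/(1-r)) : ℝ) = r := by
  have h2 : 0 < (1+r)/(1-r) := by apply div_pos <;> linarith
  have e : auxPhi (Real.log ((1+r)/(1-r)) : ℝ) = (((1+r)/(1-r) - 1) / ((1+r)/(1-r) + 1) : ℝ) := by
    unfold auxPhi; rw [← Complex.ofReal_exp, Real.exp_log h2]; push_cast; rfl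
  rw [e]
  congr 1
  have : 1 - r ≠ 0 := by linarith
  field_simp
  ring

lemma aux_step {p : ℕ} {f : ℂ → ℂ} {h : ℝ} (h1 : 1 ≤ h) (hh : h < Real.pi / 2)
    (hf : AnalyticOnNhd ℂ f (ball 0 1))
    (hp : ∀ c : ℂ, ∀ s : Finset ℂ, (∀ t ∈ s, t ∈ ball (0:ℂ) 1 ∧ f t = c) → s.card ≤ p)
    (hf1 : ∀ z ∈ ball (0:ℂ) (1/16), ‖f z‖ ≤ 1) {E K c : ℝ} (hE : 1 ≤ E) (hK : 0 ≤ K)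
    (hc : c = 1/32 + Real.log 2 + Real.log (2 / Real.cos h))
    (hfK : ∀ z ∈ ball (0:ℂ) 1, 1/2 * Real.log (1 + ‖f z‖^2) ≤ K * (-Real.log (1 - ‖z‖) + E)) :
    ∀ z ∈ ball (0:ℂ) 1, 1/2 * Real.log (1 + ‖f z‖^2) ≤
      1 + √((-Real.log (1 - ‖z‖) + E + c) * (2 * Real.pi * p * (K * (-Real.log (1 - ‖z‖) + E + c))) / (2 * h))
        + 19 * √(2 * Real.pi * p * (K * (-Real.log (1 - ‖z‖) + E + c))) := by
  intro z hz
  set r := ‖z‖ with hr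
  have hr0 : 0 ≤ r := norm_nonneg z
  have hr1 : r < 1 := by simpa [hr] using hz
  set Y := -Real.log (1 - r) + E + c with hY
  have hcos0 : 0 < Real.cos h := Real.cos_pos_of_mem_Ioo ⟨by linarith, hh⟩
  have hlog2 : 0 < Real.log 2 := Real.log_pos (by norm_num)
  have hlogc : 0 < Real.log (2 / Real.cos h) := by
    apply Real.log_pos; rw [lt_div_iff₀ hcos0]; linarith [Real.cos_le_one h]
  have hL : 0 ≤ -Real.log (1 - r) := by
    have := Real.log_nonpos (show 0 ≤ 1 - r by linarith) (by linarith); linarith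
  set X := Real.log ((1+r)/(1-r)) with hX
  have hX0 : 0 ≤ X := by
    apply Real.log_nonneg; rw [le_div_iff₀ (by linarith)]; linarith
  have hX1 : X ≤ Real.log 2 - Real.log (1 - r) := by
    rw [hX, Real.log_div (by linarith) (by linarith)]
    have := Real.log_le_log (show 0 < 1 + r by linarith) (show 1 + r ≤ 2 by linarith)
    linarith
  obtain ⟨u, hu, huz⟩ : ∃ u : ℂ, ‖u‖ = 1 ∧ z = u * r := by
    by_cases h0 : z = 0
    · exact ⟨1, by simp, by simp [hr, h0]⟩
    · have : (r:ℂ) ≠ 0 := by simpa [hr] using h0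
      refine ⟨z / r, ?_, by field_simp⟩
      rw [norm_div, Complex.norm_real, Real.norm_of_nonneg hr0, ← hr, div_self]
      exact_mod_cast this
  set F : ℂ → ℂ := fun w => f (u * auxPhi w) with hF
  set Q := Icc (-(1/32)) (X+1/32) ×ℂ Icc (-h) h with hQ
  have him : ∀ w ∈ Q, |w.im| ≤ h := by
    intro w hw
    exact abs_le.mpr (Complex.mem_reProdIm.mp hw).2
  have hre : ∀ w ∈ Q, |w.re| ≤ X + 1/32 := by
    intro w hw
    have := (Complex.mem_reProdIm.mp hw).1
    exact abs_le.mpr ⟨by linarith [this.1], this.2⟩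
  have him' : ∀ w ∈ Q, |w.im| < Real.pi / 2 := fun w hw => (him w hw).trans_lt hh
  have hball : ∀ w, |w.im| < Real.pi / 2 → u * auxPhi w ∈ ball (0:ℂ) 1 := by
    intro w hw
    rw [mem_ball_zero_iff, norm_mul, hu, one_mul]; exact auxPhi_lt hw
  have hFan : AnalyticOnNhd ℂ F Q := by
    intro w hw
    exact AnalyticAt.fun_comp (hf _ (hball w (him' w hw))) (analyticAt_const.mul (auxPhi_analytic (him' w hw)))
  have hu0 : u ≠ 0 := by rw [← norm_pos_iff, hu]; norm_num
  have hFp : ∀ c : ℂ, ∀ s : Finset ℂ, (∀ t ∈ s, t ∈ Q ∧ F t = c) → s.card ≤ p := by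
    intro c s hs
    classical
    have hinj : Set.InjOn (fun w => u * auxPhi w) (s : Set ℂ) := by
      intro a ha b hb hab
      exact auxPhi_inj (him' a (hs a ha).1) (him' b (hs b hb).1) (mul_left_cancel₀ hu0 hab)
    rw [← Finset.card_image_of_injOn hinj]
    apply hp c
    intro t ht
    obtain ⟨w, hw, rfl⟩ := Finset.mem_image.mp ht
    exact ⟨hball w (him' w (hs w hw).1), (hs w hw).2⟩
  have hV : ∀ w ∈ Q, 1/2 * Real.log (1 + ‖F w‖^2) ≤ K * Y := by
    intro w hw
    refine (hfK _ (hball w (him' w hw))).trans ?_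
    apply mul_le_mul_of_nonneg_left _ hK
    rw [norm_mul, hu, one_mul]
    have h2 := auxPhi_norm hh (him w hw)
    have h3 := Real.log_le_log (by positivity) h2
    rw [Real.log_mul (by positivity) (by positivity), Real.log_exp,
      Real.log_div (by positivity) (by norm_num)] at h3
    have h4 : Real.log (2 / Real.cos h) = Real.log 2 - Real.log (Real.cos h) :=
      Real.log_div (by norm_num) hcos0.ne'
    have h5 := hre w hw
    linarith
  have hY0 : 0 ≤ Y := by linarith
  have hKY : 0 ≤ K * Y := mul_nonneg hK hY0
  have hQmeas : MeasurableSet Q := by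
    apply IsCompact.measurableSet
    exact isCompact_Icc.reProdIm isCompact_Icc
  have hEn := aux_energy hKY hQmeas (fun w hw => (hFan w hw).hasStrictDerivAt) hFp hV
  have hB : ∀ x : ℝ, x ∈ Icc (-(1/32)) (1/32:ℝ) → 1/2 * Real.log (1 + ‖F x‖^2) ≤ 1 := by
    intro x hx
    have h2 : ‖F x‖ ≤ 1 := by
      apply hf1
      rw [mem_ball_zero_iff, norm_mul, hu, one_mul]; exact auxPhi_small (abs_le.mpr hx)
    have h3 : Real.log (1 + ‖F x‖^2) ≤ Real.log 2 := by
      apply Real.log_le_log (by positivity)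
      nlinarith [norm_nonneg (F x)]
    have := Real.log_two_lt_d9
    linarith
  have hpi := Real.pi_pos
  have hD0 : 0 ≤ 2 * Real.pi * p * (K * Y) := by positivity
  have hmain := aux_rect hX0 h1 (by linarith [Real.pi_lt_d2]) hFan hB hD0 hEn
  have hFX : F X = f z := by
    simp only [hF]; rw [hX, auxPhi_log hr0 hr1, ← huz]
  rw [hFX] at hmain
  refine hmain.trans ?_
  gcongr
  linarith

lemma aux_num {a a' b c : ℝ} (ha : a < a') (ha0 : 0 ≤ a) (hc : 0 ≤ c) :
    ∃ E : ℝ, 1 ≤ E ∧ ∀ Y ≥ E, 1 + a * (Y + c) + b * √(Y + c) ≤ a' * Y := by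
  set δ := a' - a with hδ
  have hδ0 : 0 < δ := by linarith
  refine ⟨1 + (a * c + δ/2*c + b^2/(2*δ) + 1) * (2/δ), ?_, ?_⟩
  · have : 0 ≤ (a * c + δ/2*c + b^2/(2*δ) + 1) * (2/δ) := by positivity
    linarith
  · intro Y hY
    have hM : 0 ≤ (a * c + δ/2*c + b^2/(2*δ) + 1) * (2/δ) := by positivity
    have h1 : a * c + δ/2*c + b^2/(2*δ) + 1 ≤ δ/2 * Y := by
      have : (a * c + δ/2*c + b^2/(2*δ) + 1) = δ/2 * ((a * c + δ/2*c + b^2/(2*δ) + 1) * (2/δ)) := by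
        field_simp
      rw [this]
      gcongr
      linarith
    have hT : 0 ≤ Y + c := by linarith
    have h2 : b * √(Y+c) ≤ δ/2 * (Y+c) + b^2/(2*δ) := by
      have e : δ/2 * (Y+c) + b^2/(2*δ) - b * √(Y+c) = (δ * √(Y+c) - b)^2 / (2*δ) := by
        field_simp
        nlinarith [Real.sq_sqrt hT]
      have : 0 ≤ (δ * √(Y+c) - b)^2 / (2*δ) := by positivity
      linarith
    have : a' = a + δ := by ring
    rw [this]
    linarith

lemma aux_boot (p : ℕ) (hp1 : 1 ≤ p) : ∃ E : ℝ, 1 ≤ E ∧ ∀ f : ℂ → ℂ,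
    AnalyticOnNhd ℂ f (ball 0 1) →
    (∀ c : ℂ, ∀ s : Finset ℂ, (∀ t ∈ s, t ∈ ball (0:ℂ) 1 ∧ f t = c) → s.card ≤ p) →
    (∀ z ∈ ball (0:ℂ) (1/16), ‖f z‖ ≤ 1) → ∀ K : ℝ, 1 ≤ K →
    (∀ z ∈ ball (0:ℂ) 1, 1/2 * Real.log (1 + ‖f z‖^2) ≤ K * (-Real.log (1 - ‖z‖) + E)) →
    ∀ z ∈ ball (0:ℂ) 1, 1/2 * Real.log (1 + ‖f z‖^2) ≤
      √(K * (2 * p + 1)) * (-Real.log (1 - ‖z‖) + E) := by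
  have hpi := Real.pi_gt_three
  have hp1' : (1:ℝ) ≤ p := by exact_mod_cast hp1
  set h := 2 * Real.pi * p / (4 * p + 1) with hh
  have h1 : 1 ≤ h := by rw [hh, le_div_iff₀ (by positivity)]; nlinarith
  have h2 : h < Real.pi / 2 := by rw [hh, div_lt_div_iff₀ (by positivity) (by norm_num)]; nlinarith
  have hcos0 : 0 < Real.cos h := Real.cos_pos_of_mem_Ioo ⟨by linarith, h2⟩
  have hlog2 : 0 < Real.log 2 := Real.log_pos (by norm_num)
  have hlogc : 0 < Real.log (2 / Real.cos h) := by
    apply Real.log_pos; rw [lt_div_iff₀ hcos0]; linarith [Real.cos_le_one h]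
  obtain ⟨E, hE1, hE⟩ := aux_num (a := √(2*p+1/2)) (a' := √(2*p+1)) (b := 19 * √(2 * Real.pi * p))
    (c := 1/32 + Real.log 2 + Real.log (2 / Real.cos h))
    (Real.sqrt_lt_sqrt (by positivity) (by linarith)) (by positivity) (by positivity)
  refine ⟨E, hE1, ?_⟩
  intro f hf hp hf1 K hK hfK z hz
  have hs := aux_step h1 h2 hf hp hf1 hE1 (by linarith) rfl hfK z hz
  refine hs.trans ?_
  set c := 1/32 + Real.log 2 + Real.log (2 / Real.cos h) with hc
  have hr1 : ‖z‖ < 1 := by simpa using hz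
  have hL : 0 ≤ -Real.log (1 - ‖z‖) := by
    have := Real.log_nonpos (show 0 ≤ 1 - ‖z‖ by linarith) (by linarith [norm_nonneg z]); linarith
  set Y := -Real.log (1 - ‖z‖) + E with hY
  have hYE := hE Y (by linarith)
  have hc0 : 0 < c := by positivity
  have hY0 : 0 ≤ Y + c := by linarith
  have e1 : √((Y + c) * (2 * Real.pi * p * (K * (Y + c))) / (2 * h)) = √K * (√(2*p+1/2) * (Y + c)) := by
    have : (Y + c) * (2 * Real.pi * p * (K * (Y + c))) / (2 * h) = K * ((2*p+1/2) * (Y+c)^2) := by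
      rw [hh]; field_simp; ring
    rw [this, Real.sqrt_mul (by linarith), Real.sqrt_mul (by positivity), Real.sqrt_sq hY0]
  have e2 : √(2 * Real.pi * p * (K * (Y + c))) = √K * (√(2 * Real.pi * p) * √(Y+c)) := by
    rw [show 2 * Real.pi * p * (K * (Y + c)) = K * (2 * Real.pi * p * (Y + c)) by ring,
      Real.sqrt_mul (by linarith), Real.sqrt_mul (by positivity)]
  have e3 : 1 ≤ √K := Real.one_le_sqrt.mpr hK
  have e4 : √(K * (2 * p + 1)) = √K * √(2*p+1) := Real.sqrt_mul (by linarith) _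
  rw [e1, e2, e4, mul_assoc (√K)]
  calc _ ≤ √K * (1 + √(2*p+1/2) * (Y + c) + 19 * √(2 * Real.pi * p) * √(Y+c)) := by linarith
    _ ≤ _ := by gcongr

lemma aux_bdd (p : ℕ) (hp1 : 1 ≤ p) : ∃ E : ℝ, 1 ≤ E ∧ ∀ f : ℂ → ℂ,
    AnalyticOnNhd ℂ f (ball 0 1) →
    (∀ c : ℂ, ∀ s : Finset ℂ, (∀ t ∈ s, t ∈ ball (0:ℂ) 1 ∧ f t = c) → s.card ≤ p) →
    (∀ z ∈ ball (0:ℂ) (1/16), ‖f z‖ ≤ 1) → (∃ M, ∀ z ∈ ball (0:ℂ) 1, ‖f z‖ ≤ M) →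
    ∀ z ∈ ball (0:ℂ) 1, ‖f z‖ ≤ Real.exp ((2 * p + 1) * E) / (1 - ‖z‖)^(2*p+1) := by
  obtain ⟨E, hE1, hE⟩ := aux_boot p hp1
  refine ⟨E, hE1, ?_⟩
  intro f hf hp hf1 ⟨M, hM⟩
  have hp1' : (1:ℝ) ≤ p := by exact_mod_cast hp1
  have hYp : ∀ z ∈ ball (0:ℂ) 1, 1 ≤ -Real.log (1 - ‖z‖) + E := by
    intro z hz
    have hr1 : ‖z‖ < 1 := by simpa using hz
    have := Real.log_nonpos (show 0 ≤ 1 - ‖z‖ by linarith) (by linarith [norm_nonneg z]); linarith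
  set S : Set ℝ := {K | (2*p+1:ℝ) ≤ K ∧ ∀ z ∈ ball (0:ℂ) 1, 1/2 * Real.log (1 + ‖f z‖^2) ≤ K * (-Real.log (1 - ‖z‖) + E)} with hS
  have hbb : BddBelow S := ⟨2*p+1, fun K hK => hK.1⟩
  have hne : S.Nonempty := by
    refine ⟨max (2*p+1:ℝ) (1/2 * Real.log (1 + M^2)), le_max_left _ _, ?_⟩
    intro z hz
    have h1 : 1/2 * Real.log (1 + ‖f z‖^2) ≤ 1/2 * Real.log (1 + M^2) := by
      gcongr; exact hM z hz
    have h2 := hYp z hz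
    have h3 : (0:ℝ) ≤ max (2*p+1:ℝ) (1/2 * Real.log (1 + M^2)) := le_trans (by positivity) (le_max_left _ _)
    calc _ ≤ _ := h1
      _ ≤ max (2*p+1:ℝ) (1/2 * Real.log (1 + M^2)) := le_max_right _ _
      _ ≤ _ := by nlinarith
  set K := sInf S with hK
  have hKge : (2*p+1:ℝ) ≤ K := le_csInf hne (fun K hK => hK.1)
  have hKS : K ∈ S := by
    refine ⟨hKge, ?_⟩
    intro z hz
    have h2 : 0 < -Real.log (1 - ‖z‖) + E := by linarith [hYp z hz]
    rw [← div_le_iff₀ h2]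
    apply le_csInf hne
    intro K' hK'
    rw [div_le_iff₀ h2]; exact hK'.2 z hz
  have hS2 : √(K * (2*p+1)) ∈ S := by
    refine ⟨?_, hE f hf hp hf1 K (by linarith) hKS.2⟩
    apply Real.le_sqrt_of_sq_le
    nlinarith
  have hle : K ≤ √(K * (2*p+1)) := csInf_le hbb hS2
  have hKle : K ≤ 2*p+1 := by
    have h1 := Real.le_sqrt' (by linarith : 0 < K) |>.mp hle
    nlinarith
  intro z hz
  have h1 := hKS.2 z hz
  have hr1 : ‖z‖ < 1 := by simpa using hz
  have h2 := hYp z hz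
  by_cases h0 : f z = 0
  · rw [h0, norm_zero]
    have : 0 < 1 - ‖z‖ := by linarith
    positivity
  have hpos : 0 < ‖f z‖ := norm_pos_iff.mpr h0
  have h3 : Real.log ‖f z‖ ≤ 1/2 * Real.log (1 + ‖f z‖^2) := by
    have : Real.log (‖f z‖^2) ≤ Real.log (1 + ‖f z‖^2) := Real.log_le_log (by positivity) (by linarith)
    rw [Real.log_pow] at this; push_cast at this; linarith
  have hd : 0 < 1 - ‖z‖ := by linarith
  rw [← Real.log_le_log_iff hpos (by positivity), Real.log_div (by positivity) (by positivity),
    Real.log_exp, Real.log_pow]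
  push_cast
  calc _ ≤ _ := h3
    _ ≤ _ := h1
    _ ≤ (2*p+1) * (-Real.log (1 - ‖z‖) + E) := by gcongr
    _ = _ := by ring

lemma aux_pval_scale {p : ℕ} {f : ℂ → ℂ} {z₀ b M : ℂ} {R R' : ℝ} (hb : b ≠ 0) (hbR : ‖b‖ * R' ≤ R)
    (hM : M ≠ 0)
    (hp : ∀ c : ℂ, ∀ s : Finset ℂ, (∀ t ∈ s, t ∈ ball z₀ R ∧ f t = c) → s.card ≤ p) :
    ∀ c : ℂ, ∀ s : Finset ℂ, (∀ t ∈ s, t ∈ ball (0:ℂ) R' ∧ f (z₀ + b * t) / M = c) → s.card ≤ p := by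
  classical
  intro c s hs
  have hinj : Set.InjOn (fun w => z₀ + b * w) (s : Set ℂ) := by
    intro x _ y _ hxy
    exact mul_left_cancel₀ hb (add_left_cancel hxy)
  rw [← Finset.card_image_of_injOn hinj]
  apply hp (c * M)
  intro t ht
  obtain ⟨w, hw, rfl⟩ := Finset.mem_image.mp ht
  obtain ⟨h1, h2⟩ := hs w hw
  have hb0 : 0 < ‖b‖ := norm_pos_iff.mpr hb
  refine ⟨?_, ?_⟩
  · rw [mem_ball_iff_norm, add_sub_cancel_left, norm_mul]
    rw [mem_ball_zero_iff] at h1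
    calc ‖b‖ * ‖w‖ < ‖b‖ * R' := by gcongr
      _ ≤ R := hbR
  · rw [← h2]; field_simp

lemma aux_an_scale {f : ℂ → ℂ} {z₀ b M : ℂ} {R R' : ℝ} (hb : b ≠ 0) (hbR : ‖b‖ * R' ≤ R)
    (hf : AnalyticOnNhd ℂ f (ball z₀ R)) :
    AnalyticOnNhd ℂ (fun t => f (z₀ + b * t) / M) (ball 0 R') := by
  intro t ht
  have hb0 : 0 < ‖b‖ := norm_pos_iff.mpr hb
  have hm : z₀ + b * t ∈ ball z₀ R := by
    rw [mem_ball_iff_norm, add_sub_cancel_left, norm_mul]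
    rw [mem_ball_zero_iff] at ht
    calc ‖b‖ * ‖t‖ < ‖b‖ * R' := by gcongr
      _ ≤ R := hbR
  have h1 : AnalyticAt ℂ (fun t => z₀ + b * t) t := by fun_prop
  exact (AnalyticAt.fun_comp (g := f) (f := fun t => z₀ + b * t) (hf _ hm) h1).div_const

lemma aux_thm1 (p : ℕ) (hp1 : 1 ≤ p) : ∃ C : ℝ, 1 ≤ C ∧ ∀ f : ℂ → ℂ,
    AnalyticOnNhd ℂ f (ball 0 1) →
    (∀ c : ℂ, ∀ s : Finset ℂ, (∀ t ∈ s, t ∈ ball (0:ℂ) 1 ∧ f t = c) → s.card ≤ p) →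
    ∀ M : ℝ, 0 < M → (∀ z ∈ ball (0:ℂ) (1/16), ‖f z‖ ≤ M) →
    ∀ z ∈ ball (0:ℂ) 1, ‖f z‖ ≤ C * M / (1 - ‖z‖)^(2*p+1) := by
  obtain ⟨E, hE1, hE⟩ := aux_bdd p hp1
  refine ⟨Real.exp ((2 * p + 1) * E) * 2^(2*p+1), ?_, ?_⟩
  · have h1 : 1 ≤ Real.exp ((2 * p + 1) * E) := Real.one_le_exp (by positivity)
    have h2 : (1:ℝ) ≤ 2^(2*p+1) := one_le_pow₀ (by norm_num)
    nlinarith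
  intro f hf hp M hM hfM z hz
  set r := ‖z‖ with hr
  have hr0 : 0 ≤ r := norm_nonneg z
  have hr1 : r < 1 := by simpa [hr] using hz
  set R := (1 + r) / 2 with hR
  have hR0 : 0 < R := by rw [hR]; linarith
  have hR1 : R < 1 := by rw [hR]; linarith
  have hRc : (R:ℂ) ≠ 0 := by exact_mod_cast hR0.ne'
  have hMc : (M:ℂ) ≠ 0 := by exact_mod_cast hM.ne'
  have hn : ‖(R:ℂ)‖ = R := by rw [Complex.norm_real, Real.norm_of_nonneg hR0.le]
  have hnM : ‖(M:ℂ)‖ = M := by rw [Complex.norm_real, Real.norm_of_nonneg hM.le]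
  have hbR : ‖(R:ℂ)‖ * 1 ≤ 1 := by rw [hn]; linarith
  have hball : ∀ w : ℂ, ∀ ρ : ℝ, ‖w‖ < ρ → ‖0 + (R:ℂ) * w‖ < ρ := by
    intro w ρ hw
    rw [zero_add, norm_mul, hn]
    nlinarith [norm_nonneg w]
  obtain ⟨B, hB⟩ := (isCompact_closedBall (0:ℂ) R).exists_bound_of_continuousOn
    (hf.continuousOn.mono (closedBall_subset_ball hR1))
  have hmain := hE (fun t => f (0 + R * t) / M) (aux_an_scale hRc hbR hf)
    (aux_pval_scale hRc hbR hMc hp) (by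
      intro w hw
      rw [norm_div, hnM, div_le_one hM]
      apply hfM
      rw [mem_ball_zero_iff] at hw ⊢
      exact hball w _ hw) ⟨B / M, by
      intro w hw
      rw [norm_div, hnM]
      rw [mem_ball_zero_iff] at hw
      gcongr
      apply hB
      rw [mem_closedBall_zero_iff, zero_add, norm_mul, hn]
      nlinarith⟩ (z / R) (by
      rw [mem_ball_zero_iff, norm_div, hn, div_lt_one hR0, ← hr, hR]; linarith)
  simp only [zero_add] at hmain
  rw [mul_div_cancel₀ _ hRc, norm_div, hnM, norm_div, hn, ← hr, div_le_iff₀ hM] at hmain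
  refine hmain.trans ?_
  have h1 : (1 - r)/2 ≤ 1 - r / R := by
    rw [le_sub_iff_add_le, ← le_sub_iff_add_le', div_le_iff₀ hR0, hR]
    nlinarith [sq_nonneg (1 - r)]
  have h2 : 0 < 1 - r := by linarith
  calc Real.exp ((2 * p + 1) * E) / (1 - r / R)^(2*p+1) * M
      ≤ Real.exp ((2 * p + 1) * E) / ((1 - r)/2)^(2*p+1) * M := by gcongr
    _ = _ := by rw [div_pow]; field_simp

open MeasureTheory in
lemma aux_linint {R a : ℝ} (hR : 0 ≤ R) (ha : 0 ≤ a) :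
    ∫⁻ t in Ioo 0 R, ENNReal.ofReal (2 * Real.pi * t * a) = ENNReal.ofReal (Real.pi * R^2 * a) := by
  have hi : ∫ t in (0:ℝ)..R, 2 * Real.pi * t * a = Real.pi * R^2 * a := by
    rw [intervalIntegral.integral_mul_const]
    have := intervalIntegral.integral_const_mul (μ := volume) (a := 0) (b := R) (2 * Real.pi) (fun x : ℝ => x)
    rw [this, integral_id]
    ring
  rw [← hi, intervalIntegral.integral_of_le hR, ← restrict_Ioo_eq_restrict_Ioc,
    ofReal_integral_eq_lintegral_ofReal]
  · exact (Continuous.integrableOn_Icc (by fun_prop)).mono_set Ioo_subset_Icc_self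
  · filter_upwards [ae_restrict_mem measurableSet_Ioo] with t ht
    have h0 := ht.1
    have := Real.pi_pos
    simp only [Pi.zero_apply]; positivity

open MeasureTheory in
lemma aux_int {G : ℂ → ℂ} {p : ℕ} {β : ℝ} {z₁ : ℂ} (hβ : 0 < β) (hβ1 : β ≤ 1)
    (hG : AnalyticOnNhd ℂ G (ball 0 1)) (h0 : ∀ z ∈ ball (0:ℂ) β, G z ≠ 0)
    (hs : ∀ z ∈ ball (0:ℂ) 1, G z = 0 → deriv G z ≠ 0)
    (hp : ∀ s : Finset ℂ, (∀ z ∈ s, z ∈ ball (0:ℂ) 1 ∧ G z = 0) → s.card ≤ p)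
    (hG1 : ∀ z ∈ ball (0:ℂ) (1/2), ‖G z‖ ≤ 1) (hz₁ : ‖z₁‖ < 1/16) (hGz : G z₁ ≠ 0) :
    25/16 * Real.log ‖G z₁‖ ≤ Real.log ‖G 0‖ + p * Real.log (1 / β) := by
  set a := - Real.log ‖G 0‖ - p * Real.log (1 / β) with ha
  set b := - Real.log ‖G z₁‖ with hb
  have hb0 : 0 ≤ b := by
    have := Real.log_nonpos (norm_nonneg _) (hG1 z₁ (by rw [mem_ball_zero_iff]; linarith)); linarith
  suffices a ≤ 25/16 * b by linarith
  by_cases ha0 : a ≤ 0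
  · linarith
  push Not at ha0
  set u : ℂ → ℝ := fun z => -Real.log ‖G z‖ with hu
  have hsub1 : ball z₁ (5/16) ⊆ ball (0:ℂ) (1/2) := by
    intro z hz
    rw [mem_ball_iff_norm] at hz
    rw [mem_ball_zero_iff]
    have := norm_le_norm_add_norm_sub z₁ z
    have h3 := norm_sub_rev z z₁
    have h4 : ‖z‖ ≤ ‖z₁‖ + ‖z - z₁‖ := by
      calc ‖z‖ = ‖z₁ + (z - z₁)‖ := by congr 1; ring
        _ ≤ _ := norm_add_le _ _
    linarith
  have hsub2 : ball (0:ℂ) (1/4) ⊆ ball z₁ (5/16) := by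
    intro z hz
    rw [mem_ball_zero_iff] at hz
    rw [mem_ball_iff_norm]
    have := norm_sub_le z z₁
    linarith
  have hsub3 : ball (0:ℂ) (1/2) ⊆ ball 0 1 := ball_subset_ball (by norm_num)
  have hu0 : ∀ z ∈ ball (0:ℂ) (1/2), 0 ≤ u z := by
    intro z hz
    have := Real.log_nonpos (norm_nonneg _) (hG1 z hz)
    simp only [hu]; linarith
  have hmeas : ∀ c : ℂ, ∀ R : ℝ, ball c R ⊆ ball 0 1 → Measurable ((ball c R).indicator u) := by
    intro c R hcR
    classical
    have h1 := ContinuousOn.measurable_piecewise (f := G) (hG.continuousOn.mono hcR)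
      (continuousOn_const (c := (0:ℂ))) measurableSet_ball
    have h2 : (ball c R).indicator u = fun z => -Real.log ‖(ball c R).piecewise G (fun _ => 0) z‖ := by
      ext z
      by_cases hz : z ∈ ball c R
      · simp [hz, hu]
      · simp [hz]
    rw [h2]
    exact (Real.measurable_log.comp h1.norm).neg
  have hci : ∀ c : ℂ, ∀ t : ℝ, 0 < t → closedBall c t ⊆ ball 0 1 →
      CircleIntegrable (fun z => Real.log ‖G z‖) c t := by
    intro c t ht hct
    apply MeromorphicOn.circleIntegrable_log_norm
    refine (hG.mono ?_).meromorphicOn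
    rw [abs_of_pos ht]
    exact sphere_subset_closedBall.trans hct
  have hav : ∀ c : ℂ, ∀ t : ℝ, Real.circleAverage u c t = - Real.circleAverage (fun z => Real.log ‖G z‖) c t := by
    intro c t
    simp [Real.circleAverage, hu, intervalIntegral.integral_neg]
  have hcb1 : ∀ t ∈ Ioo (0:ℝ) (5/16), closedBall z₁ t ⊆ ball 0 1 := fun t ht =>
    (closedBall_subset_ball ht.2).trans (hsub1.trans hsub3)
  have hcb2 : ∀ t ∈ Ioo (0:ℝ) (1/4), closedBall (0:ℂ) t ⊆ ball 0 1 := fun t ht =>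
    closedBall_subset_ball (by linarith [ht.2])
  have pol1 := aux_polar (hmeas z₁ (5/16) (hsub1.trans hsub3)) (fun z hz => hu0 z (hsub1 hz))
    (fun t ht => (hci z₁ t ht.1 (hcb1 t ht)).neg)
  have pol2 := aux_polar (hmeas 0 (1/4) (hsub2.trans (hsub1.trans hsub3))) (fun z hz => hu0 z (hsub1 (hsub2 hz)))
    (fun t ht => (hci 0 t ht.1 (hcb2 t ht)).neg)
  have hpi := Real.pi_pos
  have i1 : ∫⁻ t in Ioo (0:ℝ) (5/16), ENNReal.ofReal (2 * Real.pi * t * Real.circleAverage u z₁ t) ≤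
      ENNReal.ofReal (Real.pi * (5/16)^2 * b) := by
    rw [← aux_linint (by norm_num) hb0]
    apply setLIntegral_mono' measurableSet_Ioo
    intro t ht
    apply ENNReal.ofReal_le_ofReal
    have h1 := aux_jensen_sub ht.1 (hG.mono (hcb1 t ht)) hGz
    have h2 := ht.1
    rw [hav]
    have : - Real.circleAverage (fun z => Real.log ‖G z‖) z₁ t ≤ b := by linarith
    gcongr
  have i2 : ENNReal.ofReal (Real.pi * (1/4)^2 * a) ≤
      ∫⁻ t in Ioo (0:ℝ) (1/4), ENNReal.ofReal (2 * Real.pi * t * Real.circleAverage u 0 t) := by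
    rw [← aux_linint (by norm_num) ha0.le]
    apply setLIntegral_mono' measurableSet_Ioo
    intro t ht
    apply ENNReal.ofReal_le_ofReal
    have h1 := aux_jensen_up hβ hβ1 ht.1 (by linarith [ht.2]) hG h0 hs hp
    have h2 := ht.1
    rw [hav]
    have : a ≤ - Real.circleAverage (fun z => Real.log ‖G z‖) 0 t := by linarith
    gcongr
  have i3 : ∫⁻ z in ball (0:ℂ) (1/4), ENNReal.ofReal (u z) ≤ ∫⁻ z in ball z₁ (5/16), ENNReal.ofReal (u z) :=
    lintegral_mono_set hsub2
  rw [← pol2] at i2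
  rw [← pol1] at i1
  have i4 := (i2.trans i3).trans i1
  rw [ENNReal.ofReal_le_ofReal_iff (by positivity)] at i4
  have : Real.pi * a ≤ Real.pi * (25/16 * b) := by nlinarith
  exact le_of_mul_le_mul_left this hpi

open MeasureTheory in
lemma aux_regular {f : ℂ → ℂ} (hf : AnalyticOnNhd ℂ f (ball 0 1)) {m : ℝ} (hm : 0 < m) :
    ∃ c : ℂ, 2 * m < ‖c‖ ∧ ‖c‖ < 3 * m ∧ ∀ z ∈ ball (0:ℂ) 1, f z = c → deriv f z ≠ 0 := by
  set S := {z : ℂ | z ∈ ball (0:ℂ) 1 ∧ deriv f z = 0} with hS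
  have hnull : volume (f '' S) = 0 := by
    apply addHaar_image_eq_zero_of_det_fderivWithin_eq_zero volume (f' := fun _ => 0)
    · intro z hz
      have h1 := (hf z hz.1).differentiableAt.hasDerivAt.hasFDerivAt.restrictScalars ℝ
      have h2 := h1.hasFDerivWithinAt (s := S)
      refine h2.congr_fderiv ?_
      rw [hz.2]
      ext <;> simp
    · intro z _
      simp [ContinuousLinearMap.det]
  set U := {c : ℂ | 2 * m < ‖c‖ ∧ ‖c‖ < 3 * m} with hU
  have hUo : IsOpen U := by
    apply IsOpen.inter
    · exact isOpen_lt continuous_const continuous_norm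
    · exact isOpen_lt continuous_norm continuous_const
  have hUne : U.Nonempty := by
    refine ⟨((5/2 * m : ℝ) : ℂ), ?_⟩
    have : ‖((5/2 * m : ℝ) : ℂ)‖ = 5/2*m := by rw [Complex.norm_real, Real.norm_of_nonneg (by positivity)]
    constructor <;> rw [this] <;> linarith
  have hUpos : 0 < volume U := hUo.measure_pos volume hUne
  have : ¬ U ⊆ f '' S := by
    intro hsub
    have := measure_mono (μ := volume) hsub
    rw [hnull] at this
    exact absurd this (not_le.mpr hUpos)
  obtain ⟨c, hcU, hcS⟩ := Set.not_subset.mp this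
  refine ⟨c, hcU.1, hcU.2, ?_⟩
  intro z hz hfz hd
  exact hcS ⟨z, ⟨hz, hd⟩, hfz⟩


lemma aux_small (p : ℕ) (hp1 : 1 ≤ p) : ∃ C : ℝ, 0 < C ∧ ∀ f : ℂ → ℂ,
    AnalyticOnNhd ℂ f (ball 0 1) →
    (∀ c : ℂ, ∀ s : Finset ℂ, (∀ t ∈ s, t ∈ ball (0:ℂ) 1 ∧ f t = c) → s.card ≤ p) →
    ∀ β m : ℝ, 0 < β → β < 1 → 0 < m → (∀ z ∈ ball (0:ℂ) β, ‖f z‖ ≤ m) →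
    ∀ z ∈ ball (0:ℂ) 1, ‖f z‖ ≤ C * (m / β ^ p) / (1 - ‖z‖) ^ (2 * p + 1) := by
  obtain ⟨C₁, hC₁, H⟩ := aux_thm1 p hp1
  set C₂ : ℝ := C₁ * 2 ^ (2 * p + 1) + 3 with hC₂
  have hC₂3 : 3 ≤ C₂ := by
    have : 0 ≤ C₁ * 2 ^ (2 * p + 1) := by positivity
    linarith
  refine ⟨C₁ * (64 * C₂), by positivity, ?_⟩
  intro f hf hpv β m hβ hβ1 hm hfm
  have hβp : 0 < β ^ p := by positivity
  have hβp1 : β ^ p ≤ 1 := pow_le_one₀ hβ.le hβ1.le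
  have hmm : m ≤ m / β ^ p := by
    rw [le_div_iff₀ hβp]; nlinarith
  suffices key : ∀ z ∈ ball (0:ℂ) (1/16), ‖f z‖ ≤ 64 * C₂ * (m / β ^ p) by
    intro z hz
    have := H f hf hpv (64 * C₂ * (m / β ^ p)) (by positivity) key z hz
    calc _ ≤ _ := this
      _ = _ := by ring
  by_cases hcase : ∀ z ∈ ball (0:ℂ) (1/16), ‖f z‖ ≤ 12 * m
  · intro z hz
    have h1 := hcase z hz
    have : 0 < m / β ^ p := by positivity
    nlinarith
  push Not at hcase
  obtain ⟨w, hw, hwm⟩ := hcase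
  set S := (fun z => ‖f z‖) '' ball (0:ℂ) (1/16) with hS
  have hbdd : BddAbove S := by
    have hc : ContinuousOn (fun z => ‖f z‖) (closedBall (0:ℂ) (1/16)) :=
      (hf.continuousOn.mono (closedBall_subset_ball (by norm_num))).norm
    exact ((isCompact_closedBall _ _).bddAbove_image hc).mono (image_mono ball_subset_closedBall)
  set M₁ := sSup S with hM₁
  have hle : ∀ z ∈ ball (0:ℂ) (1/16), ‖f z‖ ≤ M₁ := fun z hz => le_csSup hbdd ⟨z, hz, rfl⟩
  have hM12 : 12 * m < M₁ := hwm.trans_le (hle w hw)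
  have hM0 : 0 < M₁ := by linarith
  obtain ⟨_, ⟨z₁, hz₁, rfl⟩, hz₁M⟩ := exists_lt_of_lt_csSup (s := S) ⟨_, w, hw, rfl⟩ (show M₁ / 2 < sSup S by linarith)
  simp only at hz₁M
  obtain ⟨c, hc1, hc2, hcd⟩ := aux_regular hf hm
  set N := C₂ * M₁ with hN
  have hN0 : 0 < N := by positivity
  have hNn : ‖(N:ℂ)‖ = N := by rw [Complex.norm_real, Real.norm_of_nonneg hN0.le]
  have hNc : (N:ℂ) ≠ 0 := by exact_mod_cast hN0.ne'
  set G : ℂ → ℂ := fun z => (f z - c) / N with hG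
  have hGn : ∀ z, ‖G z‖ = ‖f z - c‖ / N := fun z => by simp only [hG, norm_div, hNn]
  have hGz : ∀ z, G z = 0 → f z = c := by
    intro z hz
    simp only [hG, div_eq_zero_iff, hNc, or_false] at hz
    exact sub_eq_zero.mp hz
  have hGan : AnalyticOnNhd ℂ G (ball 0 1) := by
    intro z hz
    exact ((hf z hz).sub analyticAt_const).div_const
  have hGβ : ∀ z ∈ ball (0:ℂ) β, G z ≠ 0 := by
    intro z hz h
    have h1 := hGz z h
    have h2 := hfm z hz
    rw [h1] at h2
    linarith
  have hz₁G : M₁ / 4 ≤ ‖f z₁ - c‖ := by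
    have := norm_sub_norm_le (f z₁) c
    linarith
  have hz₁ne : G z₁ ≠ 0 := by
    rw [← norm_pos_iff, hGn]; 
    have : 0 < ‖f z₁ - c‖ := by linarith
    positivity
  have hinteg := aux_int hβ hβ1.le hGan hGβ (z₁ := z₁) (p := p) ?_ ?_ ?_ (by simpa using hz₁) hz₁ne
  · have hG0 : G 0 ≠ 0 := hGβ 0 (by simpa using hβ)
    have hG0n : ‖G 0‖ ≤ 4 * m / N := by
      rw [hGn]
      have h1 := norm_sub_le (f 0) c
      have h2 := hfm 0 (by simpa using hβ)
      gcongr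
      linarith
    have h1 : Real.log ‖G 0‖ ≤ Real.log (4 * m / N) := Real.log_le_log (norm_pos_iff.mpr hG0) hG0n
    have h2 : Real.log (1 / (4 * C₂)) ≤ Real.log ‖G z₁‖ := by
      apply Real.log_le_log (by positivity)
      rw [hGn, hN, div_le_div_iff₀ (by positivity) (by positivity)]
      nlinarith
    have h3 : Real.log (1 / (4 * C₂)) = - Real.log (4 * C₂) := by rw [one_div, Real.log_inv]
    have h4 : 0 ≤ Real.log (4 * C₂) := Real.log_nonneg (by linarith)
    have h5 : 0 ≤ Real.log (4 * m / N * (1 / β) ^ p * (4 * C₂) ^ 2) := by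
      rw [Real.log_mul (by positivity) (by positivity), Real.log_mul (by positivity) (by positivity),
        Real.log_pow, Real.log_pow]
      push_cast
      linarith
    have h6 : 1 ≤ 4 * m / N * (1 / β) ^ p * (4 * C₂) ^ 2 := by
      by_contra hlt
      push Not at hlt
      have := Real.log_neg (by positivity) hlt
      linarith
    have h7 : M₁ ≤ 64 * C₂ * (m / β ^ p) := by
      have e : 4 * m / N * (1 / β) ^ p * (4 * C₂) ^ 2 = (64 * C₂ * (m / β ^ p)) / M₁ := by
        rw [hN, one_div, inv_pow]
        field_simp
        ring
      rw [e, le_div_iff₀ hM0] at h6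
      linarith
    exact fun z hz => (hle z hz).trans h7
  · intro z hz h hd
    apply hcd z hz (hGz z h)
    have : deriv G z = deriv f z / N := by
      simp only [hG, deriv_div_const, deriv_sub_const]
    rw [this, div_eq_zero_iff] at hd
    exact hd.resolve_right hNc
  · intro s hs
    exact hpv c s (fun z hz => ⟨(hs z hz).1, hGz z (hs z hz).2⟩)
  · intro z hz
    have hz2 : ‖z‖ < 1/2 := by simpa using hz
    have h1 := H f hf hpv M₁ hM0 hle z (by rw [mem_ball_zero_iff]; linarith)
    have h2 : C₁ * M₁ / (1 - ‖z‖) ^ (2 * p + 1) ≤ C₁ * M₁ / (1/2) ^ (2 * p + 1) := by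
      gcongr
      linarith
    have h3 : C₁ * M₁ / (1/2) ^ (2 * p + 1) = C₁ * 2 ^ (2 * p + 1) * M₁ := by
      rw [one_div, inv_pow, div_inv_eq_mul]; ring
    rw [hGn, div_le_one hN0, hN, hC₂]
    have := norm_sub_le (f z) c
    nlinarith

/-- Doubling inequality for `p`-valent functions on concentric disks: there is a constant
`A'_p > 0` such that for `0 < β < α < 1` and `f` analytic and `p`-valent in a disk `D`,
`sup_{αD} |f| ≤ c_p(α,β) · sup_{βD} |f|` with
`c_p(α,β) = ((p+1)α^p + A'_p/(1-α)^{2p+1})/β^p`. -/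
theorem doubling_pvalent_concentric_disks (p : ℕ) (hp : 1 ≤ p) :
    ∃ A : ℝ, 0 < A ∧
      ∀ (α β : ℝ), 0 < β → β < α → α < 1 →
      ∀ (z₀ : ℂ) (R : ℝ), 0 < R →
      ∀ f : ℂ → ℂ, AnalyticOnNhd ℂ f (ball z₀ R) → PValentOn f (ball z₀ R) p →
        ∀ z ∈ ball z₀ (α * R),
          ‖f z‖ ≤ (((p : ℝ) + 1) * α ^ p + A / (1 - α) ^ (2 * p + 1)) / β ^ p *
            sSup ((fun w => ‖f w‖) '' ball z₀ (β * R)) := by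
  obtain ⟨C, hC, H⟩ := aux_small p hp
  refine ⟨C, hC, ?_⟩
  intro α β hβ hβα hα z₀ R hR f hf hpv z hz
  have hα0 : 0 < α := hβ.trans hβα
  have hRn : ‖(R:ℂ)‖ = R := by rw [Complex.norm_real, Real.norm_of_nonneg hR.le]
  have hRc : (R:ℂ) ≠ 0 := by exact_mod_cast hR.ne'
  set S := (fun w => ‖f w‖) '' ball z₀ (β * R) with hS
  have hbdd : BddAbove S := by
    have hc : ContinuousOn (fun z => ‖f z‖) (closedBall z₀ (β * R)) :=
      (hf.continuousOn.mono (closedBall_subset_ball (by nlinarith))).norm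
    exact ((isCompact_closedBall _ _).bddAbove_image hc).mono (image_mono ball_subset_closedBall)
  have hle : ∀ w ∈ ball z₀ (β * R), ‖f w‖ ≤ sSup S := fun w hw => le_csSup hbdd ⟨w, hw, rfl⟩
  have hS0 : 0 ≤ sSup S := (norm_nonneg _).trans (hle z₀ (mem_ball_self (by positivity)))
  have hzn : ‖z - z₀‖ < α * R := by rwa [mem_ball_iff_norm] at hz
  set K := C / (1 - α) ^ (2 * p + 1) / β ^ p with hK
  have h1α : 0 < 1 - α := by linarith
  have hK0 : 0 < K := by positivity
  have hmain : ∀ ε : ℝ, 0 < ε → ‖f z‖ ≤ K * (sSup S + ε) := by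
    intro ε hε
    have hg := aux_an_scale (M := 1) (b := (R:ℂ)) (R' := 1) hRc (by rw [hRn]; linarith) hf
    have hgp := aux_pval_scale (M := 1) (b := (R:ℂ)) (R' := 1) hRc (by rw [hRn]; linarith) one_ne_zero hpv
    set t := (z - z₀) / R with ht
    have htn : ‖t‖ < α := by
      rw [ht, norm_div, hRn, div_lt_iff₀ hR]; exact hzn
    have h1 := H _ hg hgp β (sSup S + ε) hβ (by linarith) (by linarith) ?_ t
      (by rw [mem_ball_zero_iff]; linarith)
    · have e : z₀ + R * t = z := by rw [ht, mul_div_cancel₀ _ hRc]; ring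
      simp only [e, div_one] at h1
      refine h1.trans ?_
      have h2 : C * ((sSup S + ε) / β ^ p) / (1 - ‖t‖) ^ (2 * p + 1) ≤
          C * ((sSup S + ε) / β ^ p) / (1 - α) ^ (2 * p + 1) := by
        gcongr
      refine h2.trans (le_of_eq ?_)
      rw [hK]; ring
    · intro w hw
      rw [mem_ball_zero_iff] at hw
      simp only [div_one]
      have : ‖f (z₀ + R * w)‖ ≤ sSup S := by
        apply hle
        rw [mem_ball_iff_norm, add_sub_cancel_left, norm_mul, hRn]
        nlinarith
      linarith
  have h1 : ‖f z‖ ≤ K * sSup S := by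
    apply le_of_forall_pos_le_add
    intro ε hε
    have := hmain (ε / K) (by positivity)
    rwa [mul_add, mul_div_cancel₀ _ hK0.ne'] at this
  refine h1.trans ?_
  rw [hK]
  gcongr
  have : 0 ≤ ((p:ℝ) + 1) * α ^ p := by positivity
  linarith
end
end
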